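/- Sixth new modulus-8 identity (profile (3,0,2)): the quadruple sum over n_1,n_2,n_3,n_4 ≥ 0 of q^(n_1^2+n_2^2+n_3^2+n_4^2+n_1-n_1n_2+n_2n_4)·(1 + q^{n_1+n_3+1} + q^{2n_1+n_2+n_3+n_4+2})/(q;q)_{n_1} · [n_1 choose n_2]_q [n_1 choose n_4]_q [n_2 choose n_3]_q equals 1/((q,q^2,q^2,q^3,q^5,q^6,q^6,q^7; q^8)_∞). -/

import Mathlib

/-! The identity is the limit `N → ∞` of a bounded polynomial-type identity, followed by the
Macdonald identity of type `A₂`.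

*Bounded identity.* Summing over `n₂, n₃, n₄` for fixed `n₁ = n` gives triple sums `uS` depending on
three linear weights. Shifting one summation variable at a time yields four contiguous relations
(`uS_rel1`, …, `uS_rel4`), and these imply (`sumEq`) that the generating functions
`G_c(z) = ∑ₙ gS n c zⁿ`, one for each rotation class of profiles `c = (c₀, c₁, c₂)` of level five,
satisfy the functional equations of Corteel and Welsh
`G_c(z) = ∑_J (-1)^(|J|-1) (zq;q)_(|J|-1) G_(c(J))(z q^|J|)`.
For the coefficients of `G_c(z) / (z;q)_∞` these equations become the first-order system `Sys` in
the exponent `N` of `z` (`sumB_sys`). The same system is satisfied by the alternating sums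
`weyl s₁ s₂ N = ∑_y ± q^(…) / ((q;q)_(N+y₁) (q;q)_(N+y₂) (q;q)_(N-y₁-y₂))` with weights
`s₁ = c₁ + 1`, `s₂ = c₂ + 1` (`weylP_sys`): away from the walls it is the recurrence of the three
factors `1/(q;q)`, and on the walls `s₁ = 0`, `s₂ = 0`, `s₁ + s₂ = 8` the antisymmetry of the sum
under a reflection supplies the missing relations. In the fraction field of `ℚ⟦q⟧` a solution of
`Sys` is determined by its value at `N = 0` (`sys_unique`), which is `1` on both sides, so the two
agree (`bounded_identity`).

*Limit.* For the profile `(3, 0, 2)` the left side tends to the quadruple sum divided by `(q;q)_∞`,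
and the right side to a theta series `∑ tT` of type `A₂` divided by `(q;q)_∞³` (`limit_identity`).

*Product.* Multiply the Jacobi triple products for `∑ (-1)^i q^(8 i(i-1)/2 + a i)`, `a = 1, 3, 4`,
and substitute `i = m - k`, `j = n - k`. The sum over `k` is, according to the residue of `m + n`
modulo `3`, either zero or the term of `∑ tT` at `(m, n - m)` times `(q⁸;q⁸)_∞` (`fibre`). Hence
`∑ tT` is an infinite product (`macdonald`), and regrouping `(q;q)_∞` modulo `8` gives the result.
The triple product itself is proved through its finite form `jac_eq`. -/

open scoped Finset

noncomputable instance : TopologicalSpace (PowerSeries ℚ) :=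
  Pi.topologicalSpace (ι := Unit →₀ ℕ) (Y := fun _ => ℚ)

/-- The formal variable `q`. -/
noncomputable def q : PowerSeries ℚ := PowerSeries.X

/-- The q-Pochhammer symbol `(q;q)_n = ∏_{k=0}^{n-1} (1 - q·q^k)`. -/
noncomputable def qPoch (n : ℕ) : PowerSeries ℚ :=
  ∏ k ∈ Finset.range n, (1 - q ^ (k + 1))

/-- The Gaussian binomial coefficient `[m choose k]_q`, zero unless `k ≤ m`. -/
noncomputable def qBinom (m k : ℕ) : PowerSeries ℚ :=
  if k ≤ m then qPoch m * (qPoch k * qPoch (m - k))⁻¹ else 0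

/-! ### The inner triple sums and their contiguous relations -/

section Toolkit
variable {K : Type*} [Field K]

/-- `1/(p;p)_m`, extended by zero to negative `m`. -/
noncomputable def ip (p : K) (m : ℤ) : K :=
  if m < 0 then 0 else (∏ k ∈ Finset.range m.toNat, (1 - p ^ (k + 1)))⁻¹

lemma ip_neg (p : K) {m : ℤ} (h : m < 0) : ip p m = 0 := by simp [ip, h]

@[simp] lemma ip_zero (p : K) : ip p 0 = 1 := by simp [ip]

lemma ip_nat (p : K) (m : ℕ) : ip p m = (∏ k ∈ Finset.range m, (1 - p ^ (k + 1)))⁻¹ := by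
  simp [ip]

lemma nonneg_of_ip_ne (p : K) {m : ℤ} (h : ip p m ≠ 0) : 0 ≤ m := by
  by_contra hm
  exact h (ip_neg p (by omega))

/-- With the convention at negative integers the recurrence holds for every integer `m`, without
boundary terms. -/
lemma ip_rec {p : K} (hp : ∀ n : ℕ, 0 < n → p ^ n ≠ 1) (m : ℤ) :
    (1 - p ^ m) * ip p m = ip p (m - 1) := by
  rcases lt_trichotomy m 0 with h | rfl | h
  · rw [ip_neg p h, ip_neg p (by omega), mul_zero]
  · rw [ip_neg p (show (0 : ℤ) - 1 < 0 by norm_num)]; simp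
  · obtain ⟨k, rfl⟩ : ∃ k : ℕ, m = (k + 1 : ℕ) := ⟨m.toNat - 1, by omega⟩
    have h1 : ((k + 1 : ℕ) : ℤ) - 1 = (k : ℕ) := by push_cast; ring
    rw [h1, ip_nat, ip_nat, Finset.prod_range_succ, mul_inv, zpow_natCast]
    have : 1 - p ^ (k + 1) ≠ 0 := sub_ne_zero.2 (hp (k + 1) (by omega)).symm
    field_simp

lemma ip_ne_zero {p : K} (hp : ∀ n : ℕ, 0 < n → p ^ n ≠ 1) {m : ℤ} (hm : 0 ≤ m) :
    ip p m ≠ 0 := by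
  lift m to ℕ using hm
  rw [ip_nat]
  refine inv_ne_zero (Finset.prod_ne_zero_iff.2 ?_)
  exact fun k _ => sub_ne_zero.2 (hp (k + 1) (by omega)).symm

lemma finsum_lin2 {ι : Type*} {f g : ι → K} (hf : f.support.Finite) (hg : g.support.Finite)
    (a b : K) : a * ∑ᶠ i, f i + b * ∑ᶠ i, g i = ∑ᶠ i, (a * f i + b * g i) := by
  rw [mul_finsum, mul_finsum, finsum_add_distrib]
  · exact hf.subset fun i hi h => hi (by simp [h])
  · exact hg.subset fun i hi h => hi (by simp [h])

/-- Summand of `uS`, at `t = (n₂, n₃, n₄)`. -/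
noncomputable def uT (x : K) (n b c d : ℤ) (t : ℤ × ℤ × ℤ) : K :=
  x ^ (n ^ 2 + t.1 ^ 2 + t.2.1 ^ 2 + t.2.2 ^ 2 - n * t.1 + t.1 * t.2.2 + b * t.1 + c * t.2.1
      + d * t.2.2)
    * (ip x (n - t.1) * ip x t.2.2 * ip x (n - t.2.2) * ip x t.2.1 * ip x (t.1 - t.2.1))

/-- The inner triple sum over `(n₂, n₃, n₄)` for fixed `n₁ = n`, with linear weights
`b, c, d` on `n₂, n₃, n₄`, divided by `(x;x)_n`. -/
noncomputable def uS (x : K) (n b c d : ℤ) : K := ∑ᶠ t, uT x n b c d t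

lemma uT_bounds {x : K} {n b c d : ℤ} {t : ℤ × ℤ × ℤ} (h : uT x n b c d t ≠ 0) :
    0 ≤ t.2.1 ∧ t.2.1 ≤ t.1 ∧ t.1 ≤ n ∧ 0 ≤ t.2.2 ∧ t.2.2 ≤ n := by
  simp only [uT, mul_ne_zero_iff] at h
  obtain ⟨-, ⟨⟨⟨h1, h2⟩, h3⟩, h4⟩, h5⟩ := h
  have := nonneg_of_ip_ne x h1
  have := nonneg_of_ip_ne x h2
  have := nonneg_of_ip_ne x h3
  have := nonneg_of_ip_ne x h4
  have := nonneg_of_ip_ne x h5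
  omega

lemma uT_fin (x : K) (n b c d : ℤ) : (Function.support (uT x n b c d)).Finite := by
  refine ((Finset.Icc (0 : ℤ) n) ×ˢ (Finset.Icc (0 : ℤ) n) ×ˢ
    (Finset.Icc (0 : ℤ) n)).finite_toSet.subset ?_
  intro t ht
  have := uT_bounds ht
  simp only [Finset.coe_product, Finset.coe_Icc, Set.mem_prod, Set.mem_Icc]
  omega

lemma uS_of_neg (x : K) {n : ℤ} (hn : n < 0) (b c d : ℤ) : uS x n b c d = 0 := by
  rw [uS, ← finsum_zero (α := ℤ × ℤ × ℤ)]
  congr 1; ext t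
  by_contra h
  have := uT_bounds h
  omega

lemma uS_lin2 (x : K) (n b c d m b' c' d' : ℤ) (α β : K) :
    α * uS x n b c d + β * uS x m b' c' d' = ∑ᶠ t, (α * uT x n b c d t + β * uT x m b' c' d' t) :=
  finsum_lin2 (uT_fin ..) (uT_fin ..) _ _

variable {x : K} (hx0 : x ≠ 0)
include hx0

/-- Changing the linear weights multiplies the summand by a monomial. -/
lemma uT_weights (n b c d b' c' d' : ℤ) (t : ℤ × ℤ × ℤ) :
    uT x n b' c' d' t
      = x ^ ((b' - b) * t.1 + (c' - c) * t.2.1 + (d' - d) * t.2.2) * uT x n b c d t := by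
  rw [uT, uT, ← mul_assoc (x ^ ((b' - b) * t.1 + _ + _)), ← zpow_add₀ hx0]
  congr 2; ring

variable (hx : ∀ n : ℕ, 0 < n → x ^ n ≠ 1)
include hx

/-- First contiguous relation: the factor `(1 - x^(n-n₂)) (1 - x^(n-n₄))` lowers `n` by one. -/
lemma uS_rel1 (n b c d b' d' : ℤ) (hb : b' = b - 1) (hd : d' = d - 1) :
    uS x n b c d - x ^ n * uS x n b' c d - x ^ n * uS x n b c d' + (x ^ n) ^ 2 * uS x n b' c d'
      = x * (x ^ (n - 1)) ^ 2 * uS x (n - 1) b' c d := by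
  subst hb hd
  have h1 : uS x n b c d - x ^ n * uS x n (b - 1) c d - x ^ n * uS x n b c (d - 1)
      + (x ^ n) ^ 2 * uS x n (b - 1) c (d - 1)
      = 1 * (1 * uS x n b c d + (-x ^ n) * uS x n (b - 1) c d)
        + (-x ^ n) * (1 * uS x n b c (d - 1) + (-x ^ n) * uS x n (b - 1) c (d - 1)) := by ring
  rw [h1, uS_lin2, uS_lin2, finsum_lin2, uS, mul_finsum]
  · refine finsum_congr fun ⟨i, j, l⟩ => ?_
    have h1 := ip_rec hx (n - i)
    have h2 := ip_rec hx (n - l)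
    rw [uT_weights hx0 n b c d (b - 1) c d, uT_weights hx0 n b c d b c (d - 1),
      uT_weights hx0 n b c d (b - 1) c (d - 1)]
    simp only [uT]
    rw [show n - 1 - i = n - i - 1 by ring, show n - 1 - l = n - l - 1 by ring, ← h1, ← h2]
    have e : x * (x ^ (n - 1)) ^ 2 * x ^ ((n - 1) ^ 2 + i ^ 2 + j ^ 2 + l ^ 2
          - (n - 1) * i + i * l + (b - 1) * i + c * j + d * l)
        = x ^ (n ^ 2 + i ^ 2 + j ^ 2 + l ^ 2 - n * i + i * l + b * i + c * j + d * l) := by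
      nth_rw 1 [← zpow_one x]
      rw [← zpow_natCast, ← zpow_mul, ← zpow_add₀ hx0, ← zpow_add₀ hx0]
      congr 1; push_cast; ring
    rw [← mul_assoc (x * (x ^ (n - 1)) ^ 2), e]
    have e1 : x ^ ((b - 1 - b) * i + (c - c) * j + (d - d) * l) = (x ^ i)⁻¹ := by
      rw [← zpow_neg]; congr 1; ring
    have e2 : x ^ ((b - b) * i + (c - c) * j + (d - 1 - d) * l) = (x ^ l)⁻¹ := by
      rw [← zpow_neg]; congr 1; ring
    have e3 : x ^ ((b - 1 - b) * i + (c - c) * j + (d - 1 - d) * l) = (x ^ i)⁻¹ * (x ^ l)⁻¹ := by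
      rw [← zpow_neg, ← zpow_neg, ← zpow_add₀ hx0]; congr 1; ring
    rw [e1, e2, e3, zpow_sub₀ hx0, zpow_sub₀ hx0]
    have := zpow_ne_zero i hx0
    have := zpow_ne_zero l hx0
    field_simp
    ring
  all_goals
    refine ((uT_fin x n b c d).union ((uT_fin x n (b-1) c d).union ((uT_fin x n b c (d-1)).union
      (uT_fin x n (b-1) c (d-1))))).subset fun t ht => ?_
    by_contra hh
    simp only [Set.mem_union, Function.mem_support, not_or, not_not] at hh
    apply ht
    simp [hh]

/-- Second contiguous relation: `1 - x^(n₂+1-n₃)` is inserted in the sum and `n₂` is shifted. -/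
lemma uS_rel2 (n b c d b1 c' d1 b2 : ℤ) (e : ℕ) (h1 : b1 = b + 1) (h2 : c' = c - 1)
    (h3 : d1 = d + 1) (h4 : b2 = b + 2) (he : (e : ℤ) = 1 + b) :
    x ^ n * uS x n b c d - x ^ n * uS x n b1 c' d
      = x ^ e * (uS x n b2 c d1 - x ^ n * uS x n b1 c d1) := by
  subst h1 h2 h3 h4
  have h1 : x ^ n * uS x n b c d - x ^ n * uS x n (b + 1) (c - 1) d
      = x ^ n * uS x n b c d + (-x ^ n) * uS x n (b + 1) (c - 1) d := by ring
  have h2 : x ^ e * (uS x n (b + 2) c (d + 1) - x ^ n * uS x n (b + 1) c (d + 1))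
    = x ^ e * uS x n (b + 2) c (d + 1) + (-x ^ e * x ^ n) * uS x n (b + 1) c (d + 1) := by ring
  rw [h1, h2, uS_lin2, uS_lin2,
    ← finsum_comp_equiv (Equiv.addRight ((1, 0, 0) : ℤ × ℤ × ℤ))]
  refine finsum_congr fun ⟨i, j, l⟩ => ?_
  have r1 := ip_rec hx (n - i)
  have r2 := ip_rec hx (i + 1 - j)
  rw [uT_weights hx0 n b c d (b + 1) (c - 1) d, uT_weights hx0 n b c d (b + 2) c (d + 1),
    uT_weights hx0 n b c d (b + 1) c (d + 1)]
  simp only [Equiv.coe_addRight, Prod.mk_add_mk, add_zero, uT]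
  rw [show n - (i + 1) = n - i - 1 by ring, ← r1, show i - j = i + 1 - j - 1 by ring, ← r2]
  have e0 : x ^ (n ^ 2 + (i + 1) ^ 2 + j ^ 2 + l ^ 2 - n * (i + 1) + (i + 1) * l + b * (i + 1)
        + c * j + d * l)
      = x ^ (n ^ 2 + i ^ 2 + j ^ 2 + l ^ 2 - n * i + i * l + b * i + c * j + d * l)
        * (x ^ e * (x ^ i) ^ 2 * x ^ l * (x ^ n)⁻¹) := by
    rw [← zpow_natCast x e, ← zpow_natCast (x ^ i), ← zpow_mul, ← zpow_neg, ← zpow_add₀ hx0,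
      ← zpow_add₀ hx0, ← zpow_add₀ hx0, ← zpow_add₀ hx0, he]
    congr 1; push_cast; ring
  have e1 : x ^ ((b + 1 - b) * (i + 1) + (c - 1 - c) * j + (d - d) * l) = x ^ (i + 1 - j) := by
    congr 1; ring
  have e2 : x ^ ((b + 2 - b) * i + (c - c) * j + (d + 1 - d) * l) = (x ^ i) ^ 2 * x ^ l := by
    rw [← zpow_natCast (x ^ i), ← zpow_mul, ← zpow_add₀ hx0]; congr 1; push_cast; ring
  have e3 : x ^ ((b + 1 - b) * i + (c - c) * j + (d + 1 - d) * l) = x ^ i * x ^ l := by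
    rw [← zpow_add₀ hx0]; congr 1; ring
  rw [e0, e1, e2, e3, zpow_sub₀ hx0 n i]
  have := zpow_ne_zero i hx0
  have := zpow_ne_zero n hx0
  field_simp
  ring

/-- Third contiguous relation: `1 - x^n₃` is inserted in the sum and `n₃` is shifted. -/
lemma uS_rel3 (n b c d b1 c1 c2 : ℤ) (e : ℕ) (h1 : b1 = b + 1) (h2 : c1 = c + 1)
    (h3 : c2 = c + 2) (he : (e : ℤ) = 1 + c) :
    uS x n b c d - uS x n b c1 d = x ^ e * (uS x n b c2 d - uS x n b1 c1 d) := by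
  subst h1 h2 h3
  have h1 : uS x n b c d - uS x n b (c + 1) d
      = 1 * uS x n b c d + (-1) * uS x n b (c + 1) d := by ring
  have h2 : x ^ e * (uS x n b (c + 2) d - uS x n (b + 1) (c + 1) d)
    = x ^ e * uS x n b (c + 2) d + (-x ^ e) * uS x n (b + 1) (c + 1) d := by ring
  rw [h1, h2, uS_lin2, uS_lin2,
    ← finsum_comp_equiv (Equiv.addRight ((0, 1, 0) : ℤ × ℤ × ℤ))]
  refine finsum_congr fun ⟨i, j, l⟩ => ?_
  have r1 := ip_rec hx (j + 1)
  have r2 := ip_rec hx (i - j)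
  rw [uT_weights hx0 n b c d b (c + 1) d, uT_weights hx0 n b c d b (c + 2) d,
    uT_weights hx0 n b c d (b + 1) (c + 1) d]
  simp only [Equiv.coe_addRight, Prod.mk_add_mk, add_zero, uT]
  rw [show i - (j + 1) = i - j - 1 by ring, ← r2, show ip x j = ip x (j + 1 - 1) by simp, ← r1]
  have e0 : x ^ (n ^ 2 + i ^ 2 + (j + 1) ^ 2 + l ^ 2 - n * i + i * l + b * i
        + c * (j + 1) + d * l)
      = x ^ (n ^ 2 + i ^ 2 + j ^ 2 + l ^ 2 - n * i + i * l + b * i + c * j + d * l)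
        * (x ^ e * (x ^ j) ^ 2) := by
    rw [← zpow_natCast x e, ← zpow_natCast (x ^ j), ← zpow_mul, ← zpow_add₀ hx0,
      ← zpow_add₀ hx0, he]
    congr 1; push_cast; ring
  have e1 : x ^ ((b - b) * i + (c + 1 - c) * (j + 1) + (d - d) * l) = x ^ (j + 1) := by
    congr 1; ring
  have e2 : x ^ ((b - b) * i + (c + 2 - c) * j + (d - d) * l) = (x ^ j) ^ 2 := by
    rw [← zpow_natCast (x ^ j), ← zpow_mul]; congr 1; push_cast; ring
  have e3 : x ^ ((b + 1 - b) * i + (c + 1 - c) * j + (d - d) * l) = x ^ i * x ^ j := by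
    rw [← zpow_add₀ hx0]; congr 1; ring
  rw [e0, e1, e2, e3, zpow_sub₀ hx0 i j]
  have := zpow_ne_zero j hx0
  field_simp
  ring

/-- Fourth contiguous relation: `1 - x^n₄` is inserted in the sum and `n₄` is shifted. -/
lemma uS_rel4 (n b c d b1 d1 d2 : ℤ) (e : ℕ) (h1 : b1 = b + 1) (h2 : d1 = d + 1)
    (h3 : d2 = d + 2) (he : (e : ℤ) = 1 + d) :
    uS x n b c d - uS x n b c d1 = x ^ e * (uS x n b1 c d2 - x ^ n * uS x n b1 c d1) := by
  subst h1 h2 h3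
  have h1 : uS x n b c d - uS x n b c (d + 1)
      = 1 * uS x n b c d + (-1) * uS x n b c (d + 1) := by ring
  have h2 : x ^ e * (uS x n (b + 1) c (d + 2) - x ^ n * uS x n (b + 1) c (d + 1))
    = x ^ e * uS x n (b + 1) c (d + 2) + (-x ^ e * x ^ n) * uS x n (b + 1) c (d + 1) := by ring
  rw [h1, h2, uS_lin2, uS_lin2,
    ← finsum_comp_equiv (Equiv.addRight ((0, 0, 1) : ℤ × ℤ × ℤ))]
  refine finsum_congr fun ⟨i, j, l⟩ => ?_
  have r1 := ip_rec hx (l + 1)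
  have r2 := ip_rec hx (n - l)
  rw [uT_weights hx0 n b c d b c (d + 1), uT_weights hx0 n b c d (b + 1) c (d + 2),
    uT_weights hx0 n b c d (b + 1) c (d + 1)]
  simp only [Equiv.coe_addRight, Prod.mk_add_mk, add_zero, uT]
  rw [show n - (l + 1) = n - l - 1 by ring, ← r2, show ip x l = ip x (l + 1 - 1) by simp, ← r1]
  have e0 : x ^ (n ^ 2 + i ^ 2 + j ^ 2 + (l + 1) ^ 2 - n * i + i * (l + 1) + b * i
        + c * j + d * (l + 1))
      = x ^ (n ^ 2 + i ^ 2 + j ^ 2 + l ^ 2 - n * i + i * l + b * i + c * j + d * l)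
        * (x ^ e * (x ^ l) ^ 2 * x ^ i) := by
    rw [← zpow_natCast x e, ← zpow_natCast (x ^ l), ← zpow_mul, ← zpow_add₀ hx0,
      ← zpow_add₀ hx0, ← zpow_add₀ hx0, he]
    congr 1; push_cast; ring
  have e1 : x ^ ((b - b) * i + (c - c) * j + (d + 1 - d) * (l + 1)) = x ^ (l + 1) := by
    congr 1; ring
  have e2 : x ^ ((b + 1 - b) * i + (c - c) * j + (d + 2 - d) * l) = x ^ i * (x ^ l) ^ 2 := by
    rw [← zpow_natCast (x ^ l), ← zpow_mul, ← zpow_add₀ hx0]; congr 1; push_cast; ring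
  have e3 : x ^ ((b + 1 - b) * i + (c - c) * j + (d + 1 - d) * l) = x ^ i * x ^ l := by
    rw [← zpow_add₀ hx0]; congr 1; ring
  rw [e0, e1, e2, e3, zpow_sub₀ hx0 n l]
  have := zpow_ne_zero l hx0
  field_simp
  ring

end Toolkit

/-! ### Profiles and the algebra of the functional equations -/

/-- The profiles `(c₀, c₁, c₂)` of level five, up to rotation. -/
inductive Prof
  | c500 | c410 | c401 | c320 | c302 | c311 | c221

section Profiles
variable {K : Type*} [CommRing K]
open Prof

/-- Sum of `a (c(J))` over the one-element subsets `J` of the support of the profile `c`; here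
`c(J)` arises from `c` by moving one unit from each part in `J` to the cyclically next part. -/
def single (a : Prof → K) : Prof → K
  | c500 => a c410
  | c410 => a c320 + a c401
  | c401 => a c311 + a c500
  | c320 => a c302 + a c311
  | c302 => a c221 + a c401
  | c311 => a c221 + a c302 + a c410
  | c221 => a c311 + a c221 + a c320

/-- As `single`, over the two-element subsets. -/
def pair (a : Prof → K) : Prof → K
  | c500 => 0
  | c410 => a c311
  | c401 => a c410
  | c320 => a c221
  | c302 => a c311
  | c311 => a c221 + a c401 + a c320
  | c221 => a c221 + a c311 + a c302

/-- As `single`, over the three-element subsets. -/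
def triple (a : Prof → K) : Prof → K
  | c311 => a c311
  | c221 => a c221
  | _ => 0

/-- The coefficient of `z^n` in the generating function attached to a profile, as a function of
`t = x^n`, `t' = x^(n-1)` and of the triple sums `p`, `p'` with `n₁ = n` and `n₁ = n - 1`. -/
def sumCoef (x t t' : K) (p p' : ℤ → ℤ → ℤ → K) : Prof → K
  | c500 => t * p 1 1 1
  | c410 => p 1 1 1
  | c401 => t * p 0 1 0 + x * t' ^ 2 * p' 1 1 1
  | c320 => t * p 0 1 0 + x * t' ^ 2 * p' 0 0 0 + x ^ 2 * t' ^ 3 * p' 0 1 0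
      + x ^ 3 * t' ^ 4 * p' 1 1 1
  | c302 => t * p 0 0 0 + x * t' ^ 2 * p' 0 1 0 + x ^ 2 * t' ^ 3 * p' 1 1 1
  | c311 => p 0 1 0
  | c221 => p 0 0 0

/-- The coefficient of `z^n` in the functional equation
`G_c(z) = ∑_J (-1)^(|J|-1) (zx;x)_(|J|-1) G_(c(J))(z x^|J|)`, where `g`, `g'`, `g''` are the
coefficients of `z^n`, `z^(n-1)`, `z^(n-2)` of the `G`'s and `t`, `t'`, `t''` the respective powers
of `x`. -/
def SumEq (x t t' t'' : K) (g g' g'' : Prof → K) (c : Prof) : Prop :=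
  g c = t * single g c - (t ^ 2 * pair g c - x * t' ^ 2 * pair g' c)
    + (t ^ 3 * triple g c - (x + x ^ 2) * t' ^ 3 * triple g' c + x ^ 3 * t'' ^ 3 * triple g'' c)

/-- Contiguous relation from `(1 - x^(n-n₂)) (1 - x^(n-n₄))`, linking `n` (where `t = x^n`) to
`n - 1` (where `t' = x^(n-1)`). -/
def Rel1 (x t t' : K) (u u' : ℤ → ℤ → ℤ → K) : Prop :=
  ∀ b c d b' d' : ℤ, b' = b - 1 → d' = d - 1 →
    u b c d - t * u b' c d - t * u b c d' + t ^ 2 * u b' c d' = x * t' ^ 2 * u' b' c d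

/-- Contiguous relation from the shift `n₂ → n₂ + 1`. -/
def Rel2 (x t : K) (u : ℤ → ℤ → ℤ → K) : Prop :=
  ∀ (b c d b1 c' d1 b2 : ℤ) (e : ℕ), b1 = b + 1 → c' = c - 1 → d1 = d + 1 →
    b2 = b + 2 → (e : ℤ) = 1 + b → t * u b c d - t * u b1 c' d = x ^ e * (u b2 c d1 - t * u b1 c d1)

/-- Contiguous relation from the shift `n₃ → n₃ + 1`. -/
def Rel3 (x : K) (u : ℤ → ℤ → ℤ → K) : Prop :=
  ∀ (b c d b1 c1 c2 : ℤ) (e : ℕ), b1 = b + 1 → c1 = c + 1 → c2 = c + 2 →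
    (e : ℤ) = 1 + c → u b c d - u b c1 d = x ^ e * (u b c2 d - u b1 c1 d)

/-- Contiguous relation from the shift `n₄ → n₄ + 1`. -/
def Rel4 (x t : K) (u : ℤ → ℤ → ℤ → K) : Prop :=
  ∀ (b c d b1 d1 d2 : ℤ) (e : ℕ), b1 = b + 1 → d1 = d + 1 → d2 = d + 2 →
    (e : ℤ) = 1 + d → u b c d - u b c d1 = x ^ e * (u b1 c d2 - t * u b1 c d1)

/-- The functional equation for `(4, 1, 0)` is a combination of contiguous relations. -/
lemma alg410 (x s : K) (u0 u1 : ℤ → ℤ → ℤ → K)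
    (r10 : Rel1 x (x * s) s u0 u1)
    (r20 : Rel2 x (x * s) u0)
    (r21 : Rel2 x s u1)
    (r30 : Rel3 x u0)
    (r40 : Rel4 x (x * s) u0)
    : ∀ (t2 t3 : K) (p2 p3 : ℤ → ℤ → ℤ → K), SumEq x (x * s) s t2
        (sumCoef x (x * s) s (fun b c d => (1 - x * s) * (1 - s) * u0 b c d)
          (fun b c d => (1 - s) * u1 b c d))
        (sumCoef x s t2 (fun b c d => (1 - s) * u1 b c d) p2) (sumCoef x t2 t3 p2 p3) .c410 := by
  intro t2 t3 p2 p3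
  simp only [SumEq, sumCoef, single, pair, triple]
  linear_combination (norm := skip)
    (x ^ 2 * s ^ 3 - x ^ 2 * s ^ 4 + x ^ 4 * s ^ 5 - x ^ 4 * s ^ 6) * r21 (-1) 1 0 0 0 1 1 0 rfl
        rfl rfl rfl rfl
    + (x * s ^ 2 - x * s ^ 3 + x ^ 3 * s ^ 4 - x ^ 3 * s ^ 5) * r10 1 1 1 0 0 rfl rfl
    + (1 - s + x ^ 2 * s ^ 2 - x ^ 2 * s ^ 3) * r10 1 1 0 0 (-1) rfl rfl
    + (x * s - 2 * x * s ^ 2 + x * s ^ 3 - x ^ 3 * s ^ 4 + x ^ 3 * s ^ 5) * r10 1 0 0 0 (-1) rfl rfl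
    + (x * s ^ 2 - x * s ^ 3 + x ^ 3 * s ^ 4 - x ^ 3 * s ^ 5) * r10 0 1 0 (-1) (-1) rfl rfl
    + (-x ^ 4 * s ^ 4 + x ^ 4 * s ^ 5) * r40 0 1 (-1) 1 0 1 0 rfl rfl rfl rfl
    + (1 - s - x * s + x * s ^ 2 + x ^ 2 * s ^ 2 - 2 * x ^ 2 * s ^ 3 + x ^ 2 * s ^ 4 - x ^ 4 * s
        ^ 5 + x ^ 4 * s ^ 6) * r20 (-1) 1 (-1) 0 0 0 1 0 rfl rfl rfl rfl rfl
    + (x * s ^ 2 - x * s ^ 3 + x ^ 3 * s ^ 4 - x ^ 3 * s ^ 5) * r20 0 1 (-1) 1 0 0 2 1 rfl rfl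
        rfl rfl rfl
    + (-s + s ^ 2 - x ^ 2 * s ^ 3 + x ^ 2 * s ^ 4) * r20 0 1 0 1 0 1 2 1 rfl rfl rfl rfl rfl
    + (x * s - x * s ^ 2 + x ^ 3 * s ^ 3 - x ^ 3 * s ^ 4) * r40 1 1 (-1) 2 0 1 0 rfl rfl rfl rfl
    + (x * s - x * s ^ 2) * r20 (-1) 0 (-1) 0 (-1) 0 1 0 rfl rfl rfl rfl rfl
    + (x ^ 2 * s ^ 2 - x ^ 2 * s ^ 3) * r30 0 (-1) (-1) 1 0 1 0 rfl rfl rfl rfl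
    + (-x * s + x * s ^ 2 + x ^ 2 * s ^ 2 - x ^ 2 * s ^ 3 - x ^ 3 * s ^ 3 + x ^ 3 * s ^ 4) * r40
        (-1) 1 (-1) 0 0 1 0 rfl rfl rfl rfl
    + (-x ^ 2 * s ^ 2 + x ^ 2 * s ^ 3) * r30 0 (-1) 0 1 0 1 0 rfl rfl rfl rfl
    + (-1 + s + x * s - x ^ 2 * s ^ 2 - x * s ^ 3 + x ^ 2 * s ^ 3 + x ^ 3 * s ^ 4 - x ^ 3 * s ^
        5) * r20 (-1) 1 0 0 0 1 1 0 rfl rfl rfl rfl rfl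
    + (-x ^ 2 * s ^ 2 + x ^ 2 * s ^ 3) * r40 (-1) 0 (-1) 0 0 1 0 rfl rfl rfl rfl
    + (x * s - x * s ^ 2) * r40 0 0 (-1) 1 0 1 0 rfl rfl rfl rfl
    + (-x * s + x * s ^ 2) * r20 (-1) 0 0 0 (-1) 1 1 0 rfl rfl rfl rfl rfl
  ring

/-- The functional equation for `(3, 1, 1)` is a combination of contiguous relations, where
`s = x^(n-2)` and `u0`, `u1`, `u2` are the triple sums at `n`, `n - 1`, `n - 2`. -/
lemma alg311 (x s : K) (u0 u1 u2 : ℤ → ℤ → ℤ → K)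
    (r10 : Rel1 x (x ^ 2 * s) (x * s) u0 u1)
    (r11 : Rel1 x (x * s) s u1 u2)
    (r20 : Rel2 x (x ^ 2 * s) u0)
    (r21 : Rel2 x (x * s) u1)
    (r22 : Rel2 x s u2)
    (r30 : Rel3 x u0)
    (r31 : Rel3 x u1)
    (r40 : Rel4 x (x ^ 2 * s) u0)
    (r41 : Rel4 x (x * s) u1)
    : ∀ (t3 : K) (p3 : ℤ → ℤ → ℤ → K), SumEq x (x ^ 2 * s) (x * s) s
        (sumCoef x (x ^ 2 * s) (x * s) (fun b c d => (1 - x ^ 2 * s) * (1 - x * s) * u0 b c d)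
          (fun b c d => (1 - x * s) * u1 b c d))
        (sumCoef x (x * s) s (fun b c d => (1 - x * s) * u1 b c d) u2)
        (sumCoef x s t3 u2 p3) .c311 := by
  intro t3 p3
  simp only [SumEq, sumCoef, single, pair, triple]
  linear_combination (norm := skip)
    (x ^ 4 * s ^ 4 + x ^ 6 * s ^ 6) * r22 (-1) 1 0 0 0 1 1 0 rfl rfl rfl rfl rfl
    + (x ^ 3 * s ^ 3 + x ^ 5 * s ^ 5) * r11 1 1 1 0 0 rfl rfl
    + (x ^ 2 * s + x ^ 4 * s ^ 3) * r11 1 1 0 0 (-1) rfl rfl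
    + (x ^ 3 * s ^ 2 - x ^ 3 * s ^ 3 - x ^ 5 * s ^ 5) * r11 1 0 0 0 (-1) rfl rfl
    + (x ^ 3 * s ^ 3 + x ^ 5 * s ^ 5) * r11 0 1 0 (-1) (-1) rfl rfl
    + (x ^ 3 * s ^ 3 - x ^ 4 * s ^ 3 + x ^ 5 * s ^ 5 - x ^ 11 * s ^ 6 + x ^ 12 * s ^ 7) * r21
        (-1) 1 0 0 0 1 1 0 rfl rfl rfl rfl rfl
    + (x ^ 2 * s - x ^ 3 * s ^ 2 + x ^ 4 * s ^ 3 - x ^ 4 * s ^ 4 - x ^ 6 * s ^ 6) * r21 (-1) 1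
        (-1) 0 0 0 1 0 rfl rfl rfl rfl rfl
    + (x ^ 3 * s ^ 2 + x ^ 5 * s ^ 4) * r41 1 1 (-1) 2 0 1 0 rfl rfl rfl rfl
    + (-x ^ 2 * s ^ 2 - x ^ 4 * s ^ 4) * r21 0 1 0 1 0 1 2 1 rfl rfl rfl rfl rfl
    + (x ^ 3 * s ^ 3 + x ^ 5 * s ^ 5) * r21 0 1 (-1) 1 0 0 2 1 rfl rfl rfl rfl rfl
    + (-x ^ 3 * s ^ 2) * r21 (-1) 0 0 0 (-1) 1 1 0 rfl rfl rfl rfl rfl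
    + (x ^ 3 * s ^ 2) * r41 0 0 (-1) 1 0 1 0 rfl rfl rfl rfl
    + (x ^ 4 * s ^ 3) * r31 0 (-1) (-1) 1 0 1 0 rfl rfl rfl rfl
    + (1 - x * s - x ^ 9 * s ^ 5 + x ^ 10 * s ^ 6) * r10 1 1 1 0 0 rfl rfl
    + (-x ^ 6 * s ^ 3 + x ^ 7 * s ^ 4) * r10 1 1 0 0 (-1) rfl rfl
    + (-x ^ 6 * s ^ 5) * r41 0 1 (-1) 1 0 1 0 rfl rfl rfl rfl
    + (-x ^ 4 * s ^ 3) * r31 0 (-1) 0 1 0 1 0 rfl rfl rfl rfl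
    + (-x ^ 4 * s ^ 2 + x ^ 5 * s ^ 3 + x ^ 9 * s ^ 5 - x ^ 10 * s ^ 6) * r10 1 0 0 0 (-1) rfl rfl
    + (-x ^ 4 * s ^ 3) * r41 (-1) 0 (-1) 0 0 1 0 rfl rfl rfl rfl
    + (x ^ 3 * s ^ 2) * r21 (-1) 0 (-1) 0 (-1) 0 1 0 rfl rfl rfl rfl rfl
    + (1 - x * s - x ^ 9 * s ^ 5 + x ^ 10 * s ^ 6) * r10 0 1 0 (-1) (-1) rfl rfl
    + (-x ^ 3 * s ^ 2 + x ^ 4 * s ^ 3 - x ^ 5 * s ^ 4) * r41 (-1) 1 (-1) 0 0 1 0 rfl rfl rfl rfl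
    + (1 - x * s - x ^ 4 * s ^ 2 + x ^ 5 * s ^ 3 + x ^ 6 * s ^ 3 - x ^ 7 * s ^ 4 - x ^ 9 * s ^ 5
        + x ^ 10 * s ^ 6) * r20 (-1) 1 0 0 0 1 1 0 rfl rfl rfl rfl rfl
    + (x ^ 2 * s - x ^ 3 * s ^ 2 - x ^ 6 * s ^ 3 + x ^ 7 * s ^ 4 + x ^ 10 * s ^ 5 - x ^ 11 * s ^
        6) * r40 0 1 (-1) 1 0 1 0 rfl rfl rfl rfl
    + (x ^ 7 * s ^ 4 - x ^ 8 * s ^ 5) * r20 0 1 0 1 0 1 2 1 rfl rfl rfl rfl rfl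
    + (-x ^ 8 * s ^ 4 + x ^ 9 * s ^ 5) * r40 1 1 (-1) 2 0 1 0 rfl rfl rfl rfl
    + (-x ^ 9 * s ^ 5 + x ^ 10 * s ^ 6) * r20 0 1 (-1) 1 0 0 2 1 rfl rfl rfl rfl rfl
    + (x ^ 6 * s ^ 3 - x ^ 7 * s ^ 4) * r30 0 (-1) 0 1 0 1 0 rfl rfl rfl rfl
    + (-x ^ 6 * s ^ 3 + x ^ 7 * s ^ 4) * r30 0 (-1) (-1) 1 0 1 0 rfl rfl rfl rfl
    + (-x ^ 2 * s + x ^ 3 * s ^ 2 + x ^ 4 * s ^ 2 - x ^ 5 * s ^ 3 - x ^ 6 * s ^ 3 + x ^ 7 * s ^ 4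
        + x ^ 11 * s ^ 6 - x ^ 12 * s ^ 7) * r20 (-1) 1 (-1) 0 0 0 1 0 rfl rfl rfl rfl rfl
    + (-x ^ 4 * s ^ 2 + x ^ 5 * s ^ 3) * r20 (-1) 0 (-1) 0 (-1) 0 1 0 rfl rfl rfl rfl rfl
    + (-x ^ 6 * s ^ 3 + x ^ 7 * s ^ 4 + x ^ 8 * s ^ 4 - x ^ 9 * s ^ 5) * r40 (-1) 1 (-1) 0 0 1 0
        rfl rfl rfl rfl
    + (-x ^ 4 * s ^ 2 + x ^ 5 * s ^ 3) * r40 0 0 (-1) 1 0 1 0 rfl rfl rfl rfl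
    + (x ^ 4 * s ^ 2 - x ^ 5 * s ^ 3) * r20 (-1) 0 0 0 (-1) 1 1 0 rfl rfl rfl rfl rfl
    + (x ^ 6 * s ^ 3 - x ^ 7 * s ^ 4) * r40 (-1) 0 (-1) 0 0 1 0 rfl rfl rfl rfl
  ring

/-- The functional equation for `(2, 2, 1)` is a combination of contiguous relations, where
`s = x^(n-2)` and `u0`, `u1`, `u2` are the triple sums at `n`, `n - 1`, `n - 2`. -/
lemma alg221 (x s : K) (u0 u1 u2 : ℤ → ℤ → ℤ → K)
    (r10 : Rel1 x (x ^ 2 * s) (x * s) u0 u1)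
    (r11 : Rel1 x (x * s) s u1 u2)
    (r20 : Rel2 x (x ^ 2 * s) u0)
    (r21 : Rel2 x (x * s) u1)
    (r22 : Rel2 x s u2)
    (r30 : Rel3 x u0)
    (r31 : Rel3 x u1)
    (r40 : Rel4 x (x ^ 2 * s) u0)
    (r41 : Rel4 x (x * s) u1)
    : ∀ (t3 : K) (p3 : ℤ → ℤ → ℤ → K), SumEq x (x ^ 2 * s) (x * s) s
        (sumCoef x (x ^ 2 * s) (x * s) (fun b c d => (1 - x ^ 2 * s) * (1 - x * s) * u0 b c d)
          (fun b c d => (1 - x * s) * u1 b c d))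
        (sumCoef x (x * s) s (fun b c d => (1 - x * s) * u1 b c d) u2)
        (sumCoef x s t3 u2 p3) .c221 := by
  intro t3 p3
  simp only [SumEq, sumCoef, single, pair, triple]
  linear_combination (norm := skip)
    (x ^ 5 * s ^ 5) * r22 (-1) 1 0 0 0 1 1 0 rfl rfl rfl rfl rfl
    + (x ^ 4 * s ^ 4) * r11 1 1 1 0 0 rfl rfl
    + (x ^ 3 * s ^ 2) * r11 1 1 0 0 (-1) rfl rfl
    + (x ^ 2 * s - x ^ 4 * s ^ 4) * r11 1 0 0 0 (-1) rfl rfl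
    + (x ^ 4 * s ^ 4) * r11 0 1 0 (-1) (-1) rfl rfl
    + (x ^ 3 * s ^ 2 - x ^ 5 * s ^ 4) * r41 0 1 (-1) 1 0 1 0 rfl rfl rfl rfl
    + (x ^ 3 * s ^ 2 - x ^ 5 * s ^ 5) * r21 (-1) 1 (-1) 0 0 0 1 0 rfl rfl rfl rfl rfl
    + (x ^ 4 * s ^ 3) * r41 1 1 (-1) 2 0 1 0 rfl rfl rfl rfl
    + (-x ^ 3 * s ^ 3) * r21 0 1 0 1 0 1 2 1 rfl rfl rfl rfl rfl
    + (x ^ 4 * s ^ 4) * r21 0 1 (-1) 1 0 0 2 1 rfl rfl rfl rfl rfl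
    + (x ^ 2 * s) * r21 (-1) 0 (-1) 0 (-1) 0 1 0 rfl rfl rfl rfl rfl
    + (x ^ 3 * s ^ 2) * r31 0 (-1) (-1) 1 0 1 0 rfl rfl rfl rfl
    + (-x ^ 3 * s ^ 2 + x ^ 4 * s ^ 4) * r21 (-1) 1 0 0 0 1 1 0 rfl rfl rfl rfl rfl
    + (-x ^ 4 * s ^ 3) * r41 (-1) 1 (-1) 0 0 1 0 rfl rfl rfl rfl
    + (-x ^ 4 * s ^ 3) * r31 0 (-1) 0 1 0 1 0 rfl rfl rfl rfl
    + (-x ^ 3 * s ^ 2) * r41 (-1) 0 (-1) 0 0 1 0 rfl rfl rfl rfl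
    + (-x ^ 3 * s ^ 2) * r21 (-1) 0 0 0 (-1) 1 1 0 rfl rfl rfl rfl rfl
    + (x ^ 3 * s ^ 2) * r41 0 0 (-1) 1 0 1 0 rfl rfl rfl rfl
    + (1 - x * s) * r10 1 0 1 0 0 rfl rfl
    + (1 - x * s) * r10 0 0 0 (-1) (-1) rfl rfl
    + (x ^ 2 * s - x ^ 3 * s ^ 2) * r40 0 0 (-1) 1 0 1 0 rfl rfl rfl rfl
    + (1 - x * s - x ^ 2 * s + x ^ 3 * s ^ 2) * r20 (-1) 0 0 0 (-1) 1 1 0 rfl rfl rfl rfl rfl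
    + (x ^ 2 * s - x ^ 3 * s ^ 2 - x ^ 4 * s ^ 2 + x ^ 5 * s ^ 3) * r30 0 (-1) 0 1 0 1 0 rfl rfl
        rfl rfl
    + (-x ^ 4 * s ^ 2 + x ^ 5 * s ^ 3) * r40 (-1) 0 (-1) 0 0 1 0 rfl rfl rfl rfl
  ring

end Profiles

/-! ### Functional equations for the sum side -/

section SumSide
variable {K : Type*} [Field K]
open Prof

/-- `(x;x)_n` times `uS`, that is the triple sum itself (zero for negative `n`). -/
noncomputable def pS (x : K) (n b c d : ℤ) : K := (ip x n)⁻¹ * uS x n b c d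

/-- The coefficient of `z^n` in the generating function attached to the profile `c`. -/
noncomputable def gS (x : K) (n : ℤ) (c : Prof) : K :=
  sumCoef x (x ^ n) (x ^ (n - 1)) (pS x n) (pS x (n - 1)) c

lemma pS_of_neg (x : K) {n : ℤ} (hn : n < 0) : pS x n = fun _ _ _ => 0 := by
  ext b c d; rw [pS, ip_neg x hn]; simp

lemma gS_of_neg (x : K) {n : ℤ} (hn : n < 0) (c : Prof) : gS x n c = 0 := by
  rw [gS, pS_of_neg x hn, pS_of_neg x (show n - 1 < 0 by omega)]
  cases c <;> simp [sumCoef]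

variable {x : K} (hx0 : x ≠ 0) (hx : ∀ n : ℕ, 0 < n → x ^ n ≠ 1)

lemma uS_zero (b c d : ℤ) : uS x 0 b c d = 1 := by
  rw [uS, finsum_eq_single _ (0, 0, 0)]
  · simp [uT]
  · intro t ht
    by_contra h
    have := uT_bounds h
    exact ht (Prod.ext_iff.2 ⟨by simp; omega, Prod.ext_iff.2 ⟨by simp; omega, by simp; omega⟩⟩)

include hx0 in
lemma uS_one (b c d : ℤ) : uS x 1 b c d = (ip x 1) ^ 2 * x
    * ((1 + x * x ^ d) + x ^ b * (1 + x * x ^ c) * (1 + x ^ 2 * x ^ d)) := by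
  rw [uS, finsum_eq_sum_of_support_subset (s := (Finset.Icc (0 : ℤ) 1) ×ˢ (Finset.Icc (0 : ℤ) 1) ×ˢ
    (Finset.Icc (0 : ℤ) 1))]
  · have h01 : Finset.Icc (0 : ℤ) 1 = {0, 1} := by decide
    have e2 : x ^ (2 : ℤ) = x ^ 2 := by norm_cast
    have e3 : x ^ (3 : ℤ) = x ^ 3 := by norm_cast
    have en : ip x (-1) = 0 := ip_neg x (by norm_num)
    simp only [h01, Finset.sum_product]
    simp [uT, zpow_add₀ hx0, e2, e3, en]
    ring
  · intro t ht
    have := uT_bounds ht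
    simp only [Finset.coe_product, Finset.coe_Icc, Set.mem_prod, Set.mem_Icc]
    omega

include hx in
lemma ip_inv_succ {n : ℤ} (hn : 0 < n) : (ip x n)⁻¹ = (1 - x ^ n) * (ip x (n - 1))⁻¹ := by
  have h := ip_rec hx n
  have h1 := ip_ne_zero hx (show 0 ≤ n by omega)
  have h2 := ip_ne_zero hx (show 0 ≤ n - 1 by omega)
  field_simp
  linear_combination -h

include hx0 hx

lemma relations (n : ℤ) : Rel1 x (x ^ n) (x ^ (n - 1)) (uS x n) (uS x (n - 1)) ∧
    Rel2 x (x ^ n) (uS x n) ∧ Rel3 x (uS x n) ∧ Rel4 x (x ^ n) (uS x n) :=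
  ⟨fun b c d b' d' => uS_rel1 hx0 hx n b c d b' d',
    fun b c d b1 c' d1 b2 e => uS_rel2 hx0 hx n b c d b1 c' d1 b2 e,
    fun b c d b1 c1 c2 e => uS_rel3 hx0 hx n b c d b1 c1 c2 e,
    fun b c d b1 d1 d2 e => uS_rel4 hx0 hx n b c d b1 d1 d2 e⟩

omit hx0 hx in
lemma sumEq_of_neg {n : ℤ} (hn : n < 0) (c : Prof) :
    SumEq x (x ^ n) (x ^ (n - 1)) (x ^ (n - 2)) (gS x n) (gS x (n - 1)) (gS x (n - 2)) c := by
  have h : ∀ m < 0, gS x m = fun _ => 0 := fun m hm => funext fun c => gS_of_neg x hm c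
  rw [h n hn, h (n - 1) (by omega), h (n - 2) (by omega)]
  cases c <;> simp [SumEq, single, pair, triple]

omit hx0 hx in
lemma sumEq_zero (c : Prof) :
    SumEq x (x ^ (0 : ℤ)) (x ^ ((0 : ℤ) - 1)) (x ^ ((0 : ℤ) - 2)) (gS x 0) (gS x (0 - 1))
      (gS x (0 - 2)) c := by
  have h : ∀ m < 0, gS x m = fun _ => 0 := fun m hm => funext fun c => gS_of_neg x hm c
  have h0 : pS x 0 = fun _ _ _ => 1 := by ext b c d; simp [pS, uS_zero]
  have h1 := pS_of_neg x (show (-1 : ℤ) < 0 by norm_num)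
  rw [h (0 - 1) (by omega), h (0 - 2) (by omega)]
  cases c <;> simp [SumEq, single, pair, triple, gS, sumCoef, h0, h1]

lemma sumEq_one (c : Prof) :
    SumEq x (x ^ (1 : ℤ)) (x ^ ((1 : ℤ) - 1)) (x ^ ((1 : ℤ) - 2)) (gS x 1) (gS x (1 - 1))
      (gS x (1 - 2)) c := by
  have h : ∀ m < 0, gS x m = fun _ => 0 := fun m hm => funext fun c => gS_of_neg x hm c
  have h0 : pS x 0 = fun _ _ _ => 1 := by ext b c d; simp [pS, uS_zero]
  have h1 := pS_of_neg x (show (-1 : ℤ) < 0 by norm_num)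
  have hne : 1 - x ≠ 0 := by simpa using sub_ne_zero.2 (hx 1 one_pos).symm
  have hi : ip x 1 = (1 - x)⁻¹ := by have := ip_nat x 1; simpa using this
  have h2 : ∀ b c d, pS x 1 b c d = x
      * ((1 + x * x ^ d) + x ^ b * (1 + x * x ^ c) * (1 + x ^ 2 * x ^ d)) / (1 - x) := by
    intro b c d
    rw [pS, uS_one hx0, hi]
    field_simp
  rw [h (1 - 2) (by omega)]
  norm_num only
  cases c <;> simp [SumEq, single, pair, triple, gS, sumCoef, h0, h1, h2] <;> field_simp <;> ring

omit hx in
/-- For these four profiles the functional equation holds by the definition of `sumCoef`. -/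
lemma sumEq_easy (n : ℤ) (c : Prof) (hc : c = c500 ∨ c = c401 ∨ c = c320 ∨ c = c302) :
    SumEq x (x ^ n) (x ^ (n - 1)) (x ^ (n - 2)) (gS x n) (gS x (n - 1)) (gS x (n - 2)) c := by
  have e0 : x ^ n = x ^ 2 * x ^ (n - 2) := by
    rw [← zpow_natCast, ← zpow_add₀ hx0]; congr 1; push_cast; ring
  have e1 : x ^ (n - 1) = x * x ^ (n - 2) := by
    rw [← zpow_one_add₀ hx0]; congr 1; ring
  rcases hc with rfl | rfl | rfl | rfl <;>
  · simp only [SumEq, single, pair, triple, gS, sumCoef]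
    rw [e0, e1]
    ring

/-- The functional equations of the sum side. The relations between `n`, `n - 1` and `n - 2` need
`(x;x)_n / (x;x)_(n-2)` to be a polynomial in `x^n`, so `n ≤ 1` is treated directly. -/
lemma sumEq (n : ℤ) (c : Prof) :
    SumEq x (x ^ n) (x ^ (n - 1)) (x ^ (n - 2)) (gS x n) (gS x (n - 1)) (gS x (n - 2)) c := by
  by_cases hc : c = c500 ∨ c = c401 ∨ c = c320 ∨ c = c302
  · exact sumEq_easy hx0 n c hc
  rcases lt_or_ge n 0 with hn | hn
  · exact sumEq_of_neg hn c
  obtain rfl | hn := hn.eq_or_lt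
  · exact sumEq_zero c
  obtain rfl | hn1 := (show 1 ≤ n by omega).eq_or_lt
  · exact sumEq_one hx0 hx c
  have e0 : x ^ n = x ^ 2 * x ^ (n - 2) := by
    rw [← zpow_natCast, ← zpow_add₀ hx0]; congr 1; push_cast; ring
  have e1 : x ^ (n - 1) = x * x ^ (n - 2) := by
    rw [← zpow_one_add₀ hx0]; congr 1; ring
  have e2 : n - 1 - 1 = n - 2 := by ring
  have e3 : x ^ n = x * x ^ (n - 1) := by rw [e0, e1]; ring
  have p1 : pS x (n - 1) = fun b c d =>
      (ip x (n - 2))⁻¹ * ((1 - x * x ^ (n - 2)) * uS x (n - 1) b c d) := by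
    ext b c d
    rw [pS, ip_inv_succ hx (show 0 < n - 1 by omega), e2, e1]; ring
  have p0 : pS x n = fun b c d => (ip x (n - 2))⁻¹ *
      ((1 - x ^ 2 * x ^ (n - 2)) * (1 - x * x ^ (n - 2)) * uS x n b c d) := by
    ext b c d
    rw [pS, ip_inv_succ hx (show 0 < n by omega), ip_inv_succ hx (show 0 < n - 1 by omega), e2,
      e1, e0]; ring
  obtain ⟨r10, r20, r30, r40⟩ := relations hx0 hx n
  obtain ⟨r11, r21, r31, r41⟩ := relations hx0 hx (n - 1)
  obtain ⟨-, r22, -, -⟩ := relations hx0 hx (n - 2)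
  rw [e2] at r11
  have s10 := r10
  rw [e0, e1] at r10
  have s20 := r20
  have s40 := r40
  have s21 := r21
  rw [e0] at r20 r40
  rw [e1] at r11 r21 r41
  have q2 : pS x (n - 2) = fun b c d => (ip x (n - 2))⁻¹ * uS x (n - 2) b c d := rfl
  cases c
  · simp at hc
  · have h := alg410 x (x ^ (n - 1)) (uS x n) (uS x (n - 1)) (by rwa [← e3]) (by rwa [← e3]) s21
      r30 (by rwa [← e3]) 0 0 (fun _ _ _ => 0) (fun _ _ _ => 0)
    simp only [SumEq, single, pair, triple, gS, sumCoef, p0, p1] at h ⊢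
    rw [e1] at h
    rw [e0, e1]
    linear_combination (ip x (n - 2))⁻¹ * h
  · simp at hc
  · simp at hc
  · simp at hc
  · have h := alg311 x (x ^ (n - 2)) (uS x n) (uS x (n - 1)) (uS x (n - 2)) r10 r11 r20 r21 r22
      r30 r31 r40 r41 0 (fun _ _ _ => 0)
    simp only [SumEq, single, pair, triple, gS, sumCoef, e2, p0, p1, q2] at h ⊢
    rw [e0, e1]
    linear_combination (ip x (n - 2))⁻¹ * h
  · have h := alg221 x (x ^ (n - 2)) (uS x n) (uS x (n - 1)) (uS x (n - 2)) r10 r11 r20 r21 r22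
      r30 r31 r40 r41 0 (fun _ _ _ => 0)
    simp only [SumEq, single, pair, triple, gS, sumCoef, e2, p0, p1, q2] at h ⊢
    rw [e0, e1]
    linear_combination (ip x (n - 2))⁻¹ * h

end SumSide

/-! ### The bounded system and its uniqueness -/

section Convolution
variable {K : Type*} [Field K]
open Prof

/-- The `N`-th coefficient of `∑ g_n z^n / (z;x)_∞`. -/
noncomputable def cv (x : K) (g : ℤ → K) (N : ℤ) : K := ∑ᶠ n : ℤ, g n * ip x (N - n)

lemma cv_support (x : K) {g : ℤ → K} (hg : ∀ n < 0, g n = 0) (N : ℤ) :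
    (Function.support fun n => g n * ip x (N - n)).Finite := by
  refine (Set.finite_Icc 0 N).subset fun n hn => ?_
  have h := mul_ne_zero_iff.1 hn
  have h1 := nonneg_of_ip_ne x h.2
  have h2 : 0 ≤ n := by
    by_contra h3
    exact h.1 (hg n (by omega))
  exact ⟨h2, by omega⟩

lemma cv_lin2 (x : K) {f g : ℤ → K} (hf : ∀ n < 0, f n = 0) (hg : ∀ n < 0, g n = 0) (a b : K)
    (N : ℤ) : cv x (fun n => a * f n + b * g n) N = a * cv x f N + b * cv x g N := by
  rw [cv, cv, cv, finsum_lin2 (cv_support x hf N) (cv_support x hg N)]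
  exact finsum_congr fun n => by ring

lemma cv_shift (x : K) (g : ℤ → K) (k N : ℤ) : cv x (fun n => g (n - k)) N = cv x g (N - k) := by
  rw [cv, cv, ← finsum_comp_equiv (Equiv.addRight k)]
  refine finsum_congr fun n => ?_
  simp only [Equiv.coe_addRight, add_sub_cancel_right]
  congr 2; ring

variable {x : K} (hx0 : x ≠ 0) (hx : ∀ n : ℕ, 0 < n → x ^ n ≠ 1)
include hx0 hx

/-- Multiplying `G(z) / (z;x)_∞` by `1 - z` replaces `z` by `z x` in the denominator. -/
lemma cv_sub {h : ℤ → K} (hh : ∀ n < 0, h n = 0) (N : ℤ) :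
    cv x (fun n => x ^ n * h n) N - cv x (fun n => x ^ n * h n) (N - 1) = x ^ N * cv x h N := by
  have hh' : ∀ n < 0, x ^ n * h n = 0 := fun n hn => by rw [hh n hn, mul_zero]
  have e : cv x (fun n => x ^ n * h n) N - cv x (fun n => x ^ n * h n) (N - 1)
      = 1 * cv x (fun n => x ^ n * h n) N + (-1) * cv x (fun n => x ^ n * h n) (N - 1) := by ring
  rw [e, cv, cv, finsum_lin2 (cv_support x hh' N) (cv_support x hh' (N - 1)), cv, mul_finsum]
  refine finsum_congr fun n => ?_
  have h1 := ip_rec hx (N - n)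
  rw [show N - 1 - n = N - n - 1 by ring, ← h1, zpow_sub₀ hx0]
  have := zpow_ne_zero n hx0
  field_simp
  ring

/-- The recurrence in `N` that both sides of the bounded identity satisfy. -/
def Sys (x : K) (A : ℤ → Prof → K) : Prop :=
  ∀ (N : ℤ) (c : Prof), A (N - 1) c
    = A N c - x ^ N * single (A N) c + (x ^ N) ^ 2 * pair (A N) c - (x ^ N) ^ 3 * triple (A N) c

/-- The bounded sum side. -/
noncomputable def sumB (x : K) (N : ℤ) (c : Prof) : K := cv x (fun n => gS x n c) N

omit hx0 hx in
lemma lin_of_neg {n : ℤ} (hn : n < 0) (c : Prof) :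
    single (gS x n) c = 0 ∧ pair (gS x n) c = 0 ∧ triple (gS x n) c = 0 := by
  have h : gS x n = fun _ => 0 := funext fun c => gS_of_neg x hn c
  rw [h]
  cases c <;> simp [single, pair, triple]

omit hx0 hx in
lemma cv_add3 (x : K) {f g h : ℤ → K} (hf : ∀ n < 0, f n = 0) (hg : ∀ n < 0, g n = 0)
    (hh : ∀ n < 0, h n = 0) (N : ℤ) :
    cv x (fun n => f n + g n + h n) N = cv x f N + cv x g N + cv x h N := by
  have h1 := cv_lin2 x hf hg 1 1 N
  have h2 := cv_lin2 x (f := fun n => 1 * f n + 1 * g n) (g := h)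
    (fun n hn => by simp [hf n hn, hg n hn]) hh 1 1 N
  simp only [one_mul] at h1 h2
  rw [h2, h1]

omit hx0 hx in
lemma cv_add2 (x : K) {f g : ℤ → K} (hf : ∀ n < 0, f n = 0) (hg : ∀ n < 0, g n = 0) (N : ℤ) :
    cv x (fun n => f n + g n) N = cv x f N + cv x g N := by
  simpa using cv_lin2 x hf hg 1 1 N

omit hx0 hx in
lemma cv_zero (x : K) (N : ℤ) : cv x (fun _ => 0) N = 0 := by simp [cv]

omit hx0 hx in
lemma cv_single (N : ℤ) (c : Prof) :
    cv x (fun n => single (gS x n) c) N = single (sumB x N) c := by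
  have h (c : Prof) : ∀ n < 0, gS x n c = 0 := fun n hn => gS_of_neg x hn c
  cases c <;> simp only [single, sumB] <;>
    simp only [cv_add2 x (h _) (h _), cv_add3 x (h _) (h _) (h _)]

omit hx0 hx in
lemma cv_pair (N : ℤ) (c : Prof) :
    cv x (fun n => pair (gS x n) c) N = pair (sumB x N) c := by
  have h (c : Prof) : ∀ n < 0, gS x n c = 0 := fun n hn => gS_of_neg x hn c
  cases c <;> simp only [pair, sumB, cv_zero] <;> simp only [cv_add3 x (h _) (h _) (h _)]

omit hx0 hx in
lemma cv_triple (N : ℤ) (c : Prof) :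
    cv x (fun n => triple (gS x n) c) N = triple (sumB x N) c := by
  cases c <;> simp only [triple, sumB, cv_zero]

/-- The functional equations of the sum side, read off from the coefficient of `z^N` in
`G_c(z) / (z;x)_∞`. -/
lemma sumB_sys : Sys x (sumB x) := by
  intro N c
  have hg : ∀ n < 0, (x ^ n)⁻¹ * gS x n c = 0 := fun n hn => by rw [gS_of_neg x hn, mul_zero]
  have h1 := cv_sub hx0 hx hg N
  have e (n : ℤ) : x ^ n * ((x ^ n)⁻¹ * gS x n c) = gS x n c := by
    rw [← mul_assoc, mul_inv_cancel₀ (zpow_ne_zero n hx0), one_mul]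
  simp only [e] at h1
  change sumB x N c - sumB x (N - 1) c = _ at h1
  set f2 : ℤ → K := fun n => x ^ n * pair (gS x n) c with hf2
  set f3 : ℤ → K := fun n => x ^ n * (x ^ n * triple (gS x n) c) with hf3
  have v1 : ∀ n < 0, single (gS x n) c = 0 := fun n hn => (lin_of_neg hn c).1
  have v2 : ∀ n < 0, f2 n = 0 := fun n hn => by simp [hf2, (lin_of_neg hn c).2.1]
  have v3 : ∀ n < 0, f3 n = 0 := fun n hn => by simp [hf3, (lin_of_neg hn c).2.2]
  have w2 : ∀ n < 0, 1 * f2 n + (-1) * f2 (n - 1) = 0 := fun n hn => by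
    rw [v2 n hn, v2 (n - 1) (by omega)]; ring
  have w3 : ∀ n < 0, 1 * f3 n + (-(1 + x)) * f3 (n - 1) = 0 := fun n hn => by
    rw [v3 n hn, v3 (n - 1) (by omega)]; ring
  have w4 : ∀ n < 0, 1 * (1 * f3 n + (-(1 + x)) * f3 (n - 1)) + x * f3 (n - 2) = 0 :=
    fun n hn => by rw [w3 n hn, v3 (n - 2) (by omega)]; ring
  have w5 : ∀ n < 0, 1 * single (gS x n) c + (-1) * (1 * f2 n + (-1) * f2 (n - 1)) = 0 :=
    fun n hn => by rw [w2 n hn, v1 n hn]; ring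
  have key : (fun n => (x ^ n)⁻¹ * gS x n c) = fun n =>
      1 * (1 * single (gS x n) c + (-1) * (1 * f2 n + (-1) * f2 (n - 1)))
        + 1 * (1 * (1 * f3 n + (-(1 + x)) * f3 (n - 1)) + x * f3 (n - 2)) := by
    ext n
    have h := sumEq hx0 hx n c
    rw [SumEq] at h
    have hne := zpow_ne_zero n hx0
    rw [h, hf2, hf3]
    simp only
    have e1 : x ^ (n - 1) = x ^ n / x := by rw [zpow_sub₀ hx0, zpow_one]
    have e2 : x ^ (n - 2) = x ^ n / x ^ 2 := by rw [zpow_sub₀ hx0]; norm_cast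
    rw [e1, e2]
    field_simp
    ring
  rw [key, cv_lin2 x w5 w4, cv_lin2 x w3 (fun n hn => v3 _ (by omega)),
    cv_lin2 x v3 (fun n hn => v3 _ (by omega)), cv_lin2 x v1 w2,
    cv_lin2 x v2 (fun n hn => v2 _ (by omega)), cv_shift, cv_shift, cv_shift, cv_single] at h1
  have k2 := cv_sub hx0 hx (h := fun n => pair (gS x n) c) (fun n hn => (lin_of_neg hn c).2.1) N
  have k3 := fun N => cv_sub hx0 hx (h := fun n => x ^ n * triple (gS x n) c)
    (fun n hn => by rw [(lin_of_neg hn c).2.2, mul_zero]) N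
  have k4 := cv_sub hx0 hx (h := fun n => triple (gS x n) c) (fun n hn => (lin_of_neg hn c).2.2) N
  have k3a := k3 N
  have k3b := k3 (N - 1)
  rw [show N - 1 - 1 = N - 2 by ring] at k3b
  change cv x f2 N - cv x f2 (N - 1) = _ at k2
  change cv x f3 N - cv x f3 (N - 1) = _ at k3a
  change cv x f3 (N - 1) - cv x f3 (N - 2) = _ at k3b
  rw [cv_pair] at k2
  rw [cv_triple] at k4
  have e3 : x * x ^ (N - 1) = x ^ N := by rw [← zpow_one_add₀ hx0]; congr 1; ring
  linear_combination -h1 + x ^ N * k2 - x ^ N * k3a + x ^ N * x * k3b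
    + x ^ N * cv x (fun n => x ^ n * triple (gS x n) c) (N - 1) * e3 - (x ^ N) ^ 2 * k4

end Convolution

section Uniqueness
open Prof

lemma single_sub {R : Type*} [CommRing R] (a b : Prof → R) (c : Prof) :
    single a c - single b c = single (fun c => a c - b c) c := by
  cases c <;> simp only [single] <;> ring

lemma pair_sub {R : Type*} [CommRing R] (a b : Prof → R) (c : Prof) :
    pair a c - pair b c = pair (fun c => a c - b c) c := by
  cases c <;> simp only [pair] <;> ring

lemma triple_sub {R : Type*} [CommRing R] (a b : Prof → R) (c : Prof) :
    triple a c - triple b c = triple (fun c => a c - b c) c := by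
  cases c <;> simp only [triple] <;> ring

lemma dvd_of_dvd {R : Type*} [CommRing R] {a : Prof → R} {y : R} (h : ∀ c, y ∣ a c) (c : Prof) :
    y ∣ single a c ∧ y ∣ pair a c ∧ y ∣ triple a c := by
  cases c <;> simp only [single, pair, triple, dvd_zero, dvd_add, h, and_self]

/-- A solution of `Sys` in the fraction field of a ring that is separated in the `π`-adic
topology, with parameter `x = π`, is determined by its value at `N = 0`: the difference `d` of two
solutions that agree at `N - 1` is `x^N` times an integral combination of the entries of `d`. -/
lemma sys_unique {R K : Type*} [CommRing R] [IsDomain R] [Field K] [Algebra R K]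
    [IsFractionRing R K] {p : R} (hp : ∀ r, (∀ k : ℕ, p ^ k ∣ r) → r = 0)
    {A B : ℤ → Prof → K} (hA : Sys (algebraMap R K p) A) (hB : Sys (algebraMap R K p) B)
    (h0 : A 0 = B 0) (N : ℕ) : A N = B N := by
  induction N with
  | zero => simpa using h0
  | succ N ih =>
    have hA := hA (N + 1 : ℕ)
    have hB := hB (N + 1 : ℕ)
    have e : ((N + 1 : ℕ) : ℤ) - 1 = (N : ℕ) := by push_cast; ring
    rw [e] at hA hB
    set a := A (N + 1 : ℕ)
    set b := B (N + 1 : ℕ)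
    have : Finite Prof := by
      refine Finite.of_surjective (![c500, c410, c401, c320, c302, c311, c221] : Fin 7 → Prof) ?_
      intro c
      cases c
      exacts [⟨0, rfl⟩, ⟨1, rfl⟩, ⟨2, rfl⟩, ⟨3, rfl⟩, ⟨4, rfl⟩, ⟨5, rfl⟩, ⟨6, rfl⟩]
    obtain ⟨m, hm⟩ := IsLocalization.exist_integer_multiples_of_finite (nonZeroDivisors R)
      (fun c => a c - b c)
    choose r hr using hm
    have hr' (c : Prof) : algebraMap R K (r c) = algebraMap R K m * (a c - b c) := by
      rw [hr, Algebra.smul_def]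
    have step (c : Prof) : r c = p ^ (N + 1) * single r c - (p ^ (N + 1)) ^ 2 * pair r c
        + (p ^ (N + 1)) ^ 3 * triple r c := by
      apply IsFractionRing.injective R K
      have h1 := hA c
      have h2 := hB c
      rw [ih, h2, zpow_natCast] at h1
      have s1 : algebraMap R K (single r c) = algebraMap R K m * (single a c - single b c) := by
        rw [single_sub]; cases c <;> simp only [single, map_add, hr'] <;> ring
      have s2 : algebraMap R K (pair r c) = algebraMap R K m * (pair a c - pair b c) := by
        rw [pair_sub]; cases c <;> simp only [pair, map_add, map_zero, hr'] <;> ring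
      have s3 : algebraMap R K (triple r c) = algebraMap R K m * (triple a c - triple b c) := by
        rw [triple_sub]; cases c <;> simp only [triple, map_zero, hr'] <;> ring
      simp only [map_add, map_sub, map_mul, map_pow, s1, s2, s3, hr']
      linear_combination -algebraMap R K m * h1
    have dv (k : ℕ) : ∀ c, p ^ k ∣ r c := by
      induction k with
      | zero => simp
      | succ k ihk =>
        intro c
        obtain ⟨⟨u, hu⟩, ⟨v, hv⟩, ⟨w, hw⟩⟩ := dvd_of_dvd ihk c
        refine ⟨p ^ N * u - p ^ (2 * N + 1) * v + p ^ (3 * N + 2) * w, ?_⟩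
        rw [step c, hu, hv, hw]
        ring
    funext c
    have h3 := hr' c
    rw [hp (r c) fun k => dv k c, map_zero] at h3
    have hm0 : algebraMap R K m ≠ 0 := by simp
    exact sub_eq_zero.1 ((mul_eq_zero.1 h3.symm).resolve_left hm0)

end Uniqueness

/-! ### The alternating sum -/

section Weyl
variable {K : Type*} [Field K]
open Prof

/-- The character `0, 1, -1` modulo three, on the residues `0, 1, 2`. -/
def chi (n : ℤ) : ℤ := if n % 3 = 1 then 1 else if n % 3 = 2 then -1 else 0

lemma chi_neg {m n : ℤ} (h : 3 ∣ m + n) : chi m = -chi n := by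
  unfold chi
  split_ifs <;> omega

lemma chi_congr {m n : ℤ} (h : 3 ∣ m - n) : chi m = chi n := by
  unfold chi
  split_ifs <;> omega

/-- One third of the quadratic form; an integer wherever `chi (y₂ - y₁ + 1)` does not vanish. -/
def quad (y : ℤ × ℤ) : ℤ := (y.1 ^ 2 + y.1 * y.2 + y.2 ^ 2 - 2 * y.1 - y.2) / 3

/-- The monomial with sign of the Weyl side, with linear weights `s₁` and `s₂` on `y₁` and
`y₁ + y₂`. -/
noncomputable def mon (x : K) (s1 s2 : ℤ) (y : ℤ × ℤ) : K :=
  chi (y.2 - y.1 + 1) * x ^ (8 * quad y + s1 * y.1 + s2 * (y.1 + y.2))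

/-- Summand of `weyl`. -/
noncomputable def wT (x : K) (s1 s2 N : ℤ) (y : ℤ × ℤ) : K :=
  mon x s1 s2 y * (ip x (N + y.1) * ip x (N + y.2) * ip x (N - y.1 - y.2))

/-- The bounded Weyl side: an alternating sum of `q`-trinomial type. -/
noncomputable def weyl (x : K) (s1 s2 N : ℤ) : K := ∑ᶠ y, wT x s1 s2 N y

lemma supp_aux {F : ℤ × ℤ → K} (a b c : ℤ)
    (h : ∀ y, F y ≠ 0 → 0 ≤ a + y.1 ∧ 0 ≤ b + y.2 ∧ 0 ≤ c - y.1 - y.2) :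
    F.support.Finite := by
  refine ((Finset.Icc (-a) (c + b)) ×ˢ (Finset.Icc (-b) (c + a))).finite_toSet.subset ?_
  intro y hy
  have := h y hy
  simp only [Finset.coe_product, Finset.coe_Icc, Set.mem_prod, Set.mem_Icc]
  omega

lemma nonneg3 (x : K) {m : K} {a b c : ℤ} (h : m * (ip x a * ip x b * ip x c) ≠ 0) :
    0 ≤ a ∧ 0 ≤ b ∧ 0 ≤ c := by
  simp only [mul_ne_zero_iff] at h
  exact ⟨nonneg_of_ip_ne x h.2.1.1, nonneg_of_ip_ne x h.2.1.2, nonneg_of_ip_ne x h.2.2⟩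

lemma wT_fin (x : K) (s1 s2 N : ℤ) : (Function.support (wT x s1 s2 N)).Finite :=
  supp_aux N N N fun _ hy => nonneg3 x hy

lemma weyl_zero (x : K) (s1 s2 : ℤ) : weyl x s1 s2 0 = 1 := by
  rw [weyl, finsum_eq_single _ (0, 0)]
  · simp [wT, mon, chi, quad]
  · intro y hy
    by_contra h
    have := nonneg3 x h
    exact hy (Prod.ext_iff.2 ⟨by simp; omega, by simp; omega⟩)

variable {x : K} (hx0 : x ≠ 0)
include hx0

lemma mon_weights (s1 s2 s1' s2' : ℤ) (y : ℤ × ℤ) :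
    mon x s1' s2' y = x ^ ((s1' - s1) * y.1 + (s2' - s2) * (y.1 + y.2)) * mon x s1 s2 y := by
  rw [mon, mon, mul_left_comm, ← zpow_add₀ hx0]
  congr 2; ring

omit hx0 in
/-- Rotating `(y₁, y₂, y₃)`, where `y₃ = -y₁ - y₂`, rotates the weights. -/
lemma weyl_rot (s1 s2 N : ℤ) : weyl x s1 s2 N = weyl x s2 (8 - s1 - s2) N := by
  symm
  rw [weyl, weyl, ← finsum_comp_equiv (⟨fun y => (y.2, -y.1 - y.2), fun y => (-y.1 - y.2, y.1),
    fun y => Prod.ext (by dsimp only; ring) rfl,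
    fun y => Prod.ext rfl (by dsimp only; ring)⟩ : ℤ × ℤ ≃ ℤ × ℤ)]
  refine finsum_congr fun ⟨y1, y2⟩ => ?_
  simp only [wT, mon, Equiv.coe_fn_mk]
  have hq : quad (y2, -y1 - y2) = quad (y1, y2) + y1 := by
    simp only [quad]
    rw [← Int.add_mul_ediv_right _ _ (by norm_num : (3 : ℤ) ≠ 0)]
    congr 1; ring
  rw [hq, chi_congr (m := -y1 - y2 - y2 + 1) (n := y2 - y1 + 1) ⟨-y2, by ring⟩,
    show N - y2 - (-y1 - y2) = N + y1 by ring, show N + (-y1 - y2) = N - y1 - y2 by ring]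
  have e : 8 * (quad (y1, y2) + y1) + s2 * y2 + (8 - s1 - s2) * (y2 + (-y1 - y2))
      = 8 * quad (y1, y2) + s1 * y1 + s2 * (y1 + y2) := by ring
  rw [e]; ring

variable (hx : ∀ n : ℕ, 0 < n → x ^ n ≠ 1)
include hx

/-- The recurrence in `N` for arbitrary weights: expand
`(1 - x^(N+y₁)) (1 - x^(N+y₂)) (1 - x^(N-y₁-y₂))` in powers of `x^N`. -/
lemma weyl_rec (s1 s2 N : ℤ) : weyl x s1 s2 (N - 1) = weyl x s1 s2 N
    - x ^ N * (weyl x (s1 + 1) s2 N + weyl x (s1 - 1) (s2 + 1) N + weyl x s1 (s2 - 1) N)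
    + (x ^ N) ^ 2 * (weyl x s1 (s2 + 1) N + weyl x (s1 - 1) s2 N + weyl x (s1 + 1) (s2 - 1) N)
    - (x ^ N) ^ 3 * weyl x s1 s2 N := by
  have fin (s1 s2) := wT_fin x s1 s2 N
  have fs : ∀ {f g : ℤ × ℤ → K}, f.support.Finite → g.support.Finite → ∀ a b : K,
      (Function.support fun y => a * f y + b * g y).Finite := fun hf hg a b =>
    (hf.union hg).subset fun y hy => by
      by_contra h
      simp only [Set.mem_union, Function.mem_support, not_or, not_not] at h
      simp [h.1, h.2] at hy
  have f1 := finsum_lin2 (fin s1 s2) (fin (s1 + 1) s2) (1 - (x ^ N) ^ 3) (-x ^ N)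
  have f2 := finsum_lin2 (fin (s1 - 1) (s2 + 1)) (fin s1 (s2 - 1)) (-x ^ N) (-x ^ N)
  have f3 := finsum_lin2 (fin s1 (s2 + 1)) (fin (s1 - 1) s2) ((x ^ N) ^ 2) ((x ^ N) ^ 2)
  have f4 := finsum_lin2 (fs (fin s1 (s2 + 1)) (fin (s1 - 1) s2) ((x ^ N) ^ 2) ((x ^ N) ^ 2))
    (fin (s1 + 1) (s2 - 1)) 1 ((x ^ N) ^ 2)
  have f5 := finsum_lin2 (fs (fin s1 s2) (fin (s1 + 1) s2) (1 - (x ^ N) ^ 3) (-x ^ N))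
    (fs (fin (s1 - 1) (s2 + 1)) (fin s1 (s2 - 1)) (-x ^ N) (-x ^ N)) 1 1
  have f6 := finsum_lin2 (fs (fs (fin s1 s2) (fin (s1 + 1) s2) (1 - (x ^ N) ^ 3) (-x ^ N))
    (fs (fin (s1 - 1) (s2 + 1)) (fin s1 (s2 - 1)) (-x ^ N) (-x ^ N)) 1 1)
    (fs (fs (fin s1 (s2 + 1)) (fin (s1 - 1) s2) ((x ^ N) ^ 2) ((x ^ N) ^ 2))
    (fin (s1 + 1) (s2 - 1)) 1 ((x ^ N) ^ 2)) 1 1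
  rw [← f5, ← f4, ← f3, ← f2, ← f1] at f6
  simp only [← weyl.eq_1] at f6
  refine Eq.trans ?_ (f6.symm.trans (by ring))
  refine finsum_congr fun ⟨y1, y2⟩ => ?_
  simp only [wT]
  rw [mon_weights hx0 s1 s2 (s1 + 1) s2, mon_weights hx0 s1 s2 (s1 - 1) (s2 + 1),
    mon_weights hx0 s1 s2 s1 (s2 - 1), mon_weights hx0 s1 s2 s1 (s2 + 1),
    mon_weights hx0 s1 s2 (s1 - 1) s2, mon_weights hx0 s1 s2 (s1 + 1) (s2 - 1)]
  have h1 := ip_rec hx (N + y1)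
  have h2 := ip_rec hx (N + y2)
  have h3 := ip_rec hx (N - y1 - y2)
  dsimp only
  rw [show N - 1 + y1 = N + y1 - 1 by ring, show N - 1 + y2 = N + y2 - 1 by ring,
    show N - 1 - y1 - y2 = N - y1 - y2 - 1 by ring, ← h1, ← h2, ← h3]
  have z1 := zpow_ne_zero y1 hx0
  have z2 := zpow_ne_zero y2 hx0
  rw [show (s1 + 1 - s1) * y1 + (s2 - s2) * (y1 + y2) = y1 by ring,
    show (s1 - 1 - s1) * y1 + (s2 + 1 - s2) * (y1 + y2) = y2 by ring,
    show (s1 - s1) * y1 + (s2 - 1 - s2) * (y1 + y2) = 0 - y1 - y2 by ring,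
    show (s1 - s1) * y1 + (s2 + 1 - s2) * (y1 + y2) = y1 + y2 by ring,
    show (s1 - 1 - s1) * y1 + (s2 - s2) * (y1 + y2) = 0 - y1 by ring,
    show (s1 + 1 - s1) * y1 + (s2 - 1 - s2) * (y1 + y2) = 0 - y2 by ring,
    zpow_add₀ hx0, zpow_add₀ hx0, zpow_add₀ hx0, zpow_sub₀ hx0, zpow_sub₀ hx0, zpow_sub₀ hx0,
    zpow_sub₀ hx0, zpow_sub₀ hx0, zpow_zero]
  field_simp
  ring

variable [CharZero K]

omit hx0 hx in
lemma finsum_anti {F : ℤ × ℤ → K} (e : ℤ × ℤ ≃ ℤ × ℤ) (h : ∀ y, F (e y) = -F y) :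
    ∑ᶠ y, F y = 0 := by
  have h1 : ∑ᶠ y, F y = -∑ᶠ y, F y := by
    conv_lhs => rw [← finsum_comp_equiv e]
    rw [← finsum_neg_distrib]
    exact finsum_congr h
  exact self_eq_neg.1 h1

/-- Boundary relation at `s₁ = 0`. -/
lemma weyl_b1 (s2 N : ℤ) : weyl x 0 s2 N = x ^ N * weyl x 1 s2 N := by
  rw [← sub_eq_zero]
  have f := finsum_lin2 (wT_fin x 0 s2 N) (wT_fin x 1 s2 N) 1 (-x ^ N)
  rw [← weyl, ← weyl] at f
  have g : weyl x 0 s2 N - x ^ N * weyl x 1 s2 N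
      = 1 * weyl x 0 s2 N + -x ^ N * weyl x 1 s2 N := by ring
  rw [g, f]
  have k (y : ℤ × ℤ) : 1 * wT x 0 s2 N y + -x ^ N * wT x 1 s2 N y
      = mon x 0 s2 y * (ip x (N + y.1 - 1) * ip x (N + y.2) * ip x (N - y.1 - y.2)) := by
    rw [wT, wT, mon_weights hx0 0 s2 1 s2, ← ip_rec hx (N + y.1), zpow_add₀ hx0 N,
      show (1 - 0) * y.1 + (s2 - s2) * (y.1 + y.2) = y.1 by ring]
    ring
  simp only [k]
  refine finsum_anti (⟨fun y => (y.2 + 1, y.1 - 1), fun y => (y.2 + 1, y.1 - 1),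
    fun y => Prod.ext (by dsimp only; ring) (by dsimp only; ring),
    fun y => Prod.ext (by dsimp only; ring) (by dsimp only; ring)⟩ : ℤ × ℤ ≃ ℤ × ℤ) fun ⟨y1, y2⟩ => ?_
  simp only [mon, Equiv.coe_fn_mk]
  have hq : quad (y2 + 1, y1 - 1) = quad (y1, y2) := by
    simp only [quad]
    congr 1; ring
  rw [hq, chi_neg (m := y1 - 1 - (y2 + 1) + 1) (n := y2 - y1 + 1) ⟨0, by ring⟩,
    show N + (y2 + 1) - 1 = N + y2 by ring, show N + (y1 - 1) = N + y1 - 1 by ring,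
    show N - (y2 + 1) - (y1 - 1) = N - y1 - y2 by ring, show y2 + 1 + (y1 - 1) = y1 + y2 by ring]
  push_cast
  simp only [zero_mul, add_zero]
  ring

/-- Boundary relation at `s₂ = 0`. -/
lemma weyl_b2 (s1 N : ℤ) : weyl x s1 0 N = x ^ N * weyl x (s1 - 1) 1 N := by
  rw [weyl_rot s1, weyl_rot (s1 - 1), weyl_b1 hx0 hx,
    show 8 - (s1 - 1) - 1 = 8 - s1 - 0 by ring]

/-- Boundary relation at `s₁ + s₂ = 8`. -/
lemma weyl_b0 (s1 N : ℤ) : weyl x s1 (8 - s1) N = x ^ N * weyl x s1 (7 - s1) N := by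
  rw [weyl_rot s1, weyl_rot s1, show 8 - s1 - (8 - s1) = 0 by ring, weyl_b2 hx0 hx,
    show 8 - s1 - 1 = 7 - s1 by ring, show 8 - s1 - (7 - s1) = 1 by ring]

omit hx0 hx [CharZero K] in
/-- The Weyl side attached to a profile `(c₀, c₁, c₂)`, with weights `c₁ + 1` and `c₂ + 1`. -/
noncomputable def weylP (x : K) (N : ℤ) : Prof → K
  | c500 => weyl x 1 1 N
  | c410 => weyl x 2 1 N
  | c401 => weyl x 1 2 N
  | c320 => weyl x 3 1 N
  | c302 => weyl x 1 3 N
  | c311 => weyl x 2 2 N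
  | c221 => weyl x 3 2 N

/-- After rotation, and reduction of the weights on the walls, `weyl_rec` becomes `Sys`. -/
lemma weylP_sys : Sys x (weylP x) := by
  intro N c
  have b1 (s : ℤ) := weyl_b1 hx0 hx s N
  have b2 (s : ℤ) := weyl_b2 hx0 hx s N
  have e41 : weyl x 4 1 N = weyl x 1 3 N := weyl_rot 4 1 N
  have e33 : weyl x 3 3 N = weyl x 3 2 N := weyl_rot 3 3 N
  have e23 : weyl x 2 3 N = weyl x 3 2 N := (weyl_rot 2 3 N).trans e33
  have e42 : weyl x 4 2 N = weyl x 2 2 N := weyl_rot 4 2 N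
  cases c <;> simp only [weylP, single, pair, triple]
  · have r := weyl_rec hx0 hx 1 1 N
    have b := b2 1
    have b' := b2 2
    norm_num1 at r b b'
    rw [b, b', b1, b1] at r
    linear_combination r
  · have r := weyl_rec hx0 hx 2 1 N
    have b := b2 2
    have b' := b2 3
    norm_num1 at r b b'
    rw [b, b'] at r
    linear_combination r
  · have r := weyl_rec hx0 hx 1 2 N
    norm_num1 at r
    rw [b1, b1] at r
    linear_combination r
  · have r := weyl_rec hx0 hx 3 1 N
    have b := b2 3
    have b' := b2 4
    norm_num1 at r b b'
    rw [b, b', e41] at r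
    linear_combination r
  · have r := weyl_rec hx0 hx 1 3 N
    norm_num1 at r
    rw [b1, b1, e23] at r
    linear_combination r
  · have r := weyl_rec hx0 hx 2 2 N
    norm_num1 at r
    rw [e23] at r
    linear_combination r
  · have r := weyl_rec hx0 hx 3 2 N
    norm_num1 at r
    rw [e23, e41, e33, e42] at r
    linear_combination r

omit hx0 hx [CharZero K] in
lemma sumB_zero (c : Prof) : sumB x 0 c = 1 := by
  rw [sumB, cv, finsum_eq_single _ 0]
  · have h : pS x 0 = fun _ _ _ => 1 := by
      ext b c d; rw [pS, uS_zero]; simp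
    have h' : pS x (0 - 1) = fun _ _ _ => 0 := pS_of_neg x (by norm_num)
    rw [gS, h, h']
    cases c <;> simp [sumCoef]
  · intro n hn
    rcases lt_or_gt_of_ne hn with h | h
    · rw [gS_of_neg x h, zero_mul]
    · rw [ip_neg x (by omega), mul_zero]

omit hx0 hx [CharZero K] in
lemma weylP_zero (c : Prof) : weylP x 0 c = 1 := by
  cases c <;> simp only [weylP, weyl_zero]

end Weyl

/-! ### Formal limits, infinite products and the bounded identity -/

section Limits
open PowerSeries Filter

instance : T2Space (PowerSeries ℚ) := PowerSeries.WithPiTopology.instT2Space ℚ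

instance : IsTopologicalRing (PowerSeries ℚ) := PowerSeries.WithPiTopology.instIsTopologicalRing ℚ

lemma tendsto_coeff {ι : Type*} {f : ι → ℚ⟦X⟧} {u : Filter ι} {g : ℚ⟦X⟧} :
    Tendsto f u (nhds g) ↔ ∀ d, Tendsto (fun i => coeff d (f i)) u (nhds (coeff d g)) :=
  PowerSeries.WithPiTopology.tendsto_iff_coeff_tendsto ℚ f u g

lemma hasSum_coeff {ι : Type*} {f : ι → ℚ⟦X⟧} {g : ℚ⟦X⟧} :
    HasSum f g ↔ ∀ d, HasSum (fun i => coeff d (f i)) (coeff d g) :=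
  PowerSeries.WithPiTopology.hasSum_iff_hasSum_coeff ℚ

/-- If `F N` converges to `G` in the `X`-adic sense, uniformly in the index, then the finite sums
of `F N` converge to the sum of `G`. -/
lemma lim_sum {ι : Type*} {F : ℕ → ι → ℚ⟦X⟧} {G : ι → ℚ⟦X⟧}
    (hF : ∀ N, (F N).support.Finite) (c : ℕ) (h : ∀ N i, X ^ (N - c) ∣ F N i - G i) :
    Summable G ∧ Tendsto (fun N => ∑ᶠ i, F N i) atTop (nhds (∑' i, G i)) := by
  have hc (d N : ℕ) (hN : d + 1 + c ≤ N) (i : ι) : coeff d (F N i) = coeff d (G i) := by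
    have := X_pow_dvd_iff.1 (h N i) d (by omega)
    rwa [map_sub, sub_eq_zero] at this
  have hs (d : ℕ) : HasSum (fun i => coeff d (G i)) (∑ᶠ i, coeff d (G i)) := by
    have hfin : (Function.support fun i => coeff d (G i)).Finite := by
      refine (hF (d + 1 + c)).subset fun i hi h0 => hi ?_
      change coeff d (G i) = 0
      rw [← hc d _ le_rfl i, h0, map_zero]
    rw [finsum_eq_sum _ hfin]
    exact hasSum_sum_of_ne_finset_zero fun i hi => by simpa using hi
  have hG : HasSum G (PowerSeries.mk fun d => ∑ᶠ i, coeff d (G i)) :=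
    hasSum_coeff.2 fun d => by rw [coeff_mk]; exact hs d
  refine ⟨hG.summable, ?_⟩
  rw [hG.tsum_eq, tendsto_coeff]
  intro d
  refine tendsto_const_nhds.congr' ?_
  filter_upwards [eventually_ge_atTop (d + 1 + c)] with N hN
  rw [coeff_mk, finsum_eq_sum _ (hF N), map_sum]
  rw [finsum_eq_sum_of_support_subset (s := (hF N).toFinset)]
  · exact Finset.sum_congr rfl fun i _ => (hc d N hN i).symm
  · intro i hi
    simp only [Set.Finite.coe_toFinset, Function.mem_support]
    intro h0
    exact hi (by simp only; rw [← hc d N hN i, h0, map_zero])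

/-- The infinite product `(X^a; X^M)_∞`. -/
noncomputable def phi (M a : ℕ) : ℚ⟦X⟧ := ∏' k : ℕ, (1 - X ^ (M * k + a))

lemma phi_mul {M : ℕ} (hM : 0 < M) (a : ℕ) : Multipliable fun k : ℕ => (1 : ℚ⟦X⟧) - X ^ (M * k + a) := by
  simp_rw [sub_eq_add_neg]
  refine PowerSeries.WithPiTopology.multipliable_one_add_of_tendsto_order_atTop_nhds_top ℚ
    (f := fun k : ℕ => -(X : ℚ⟦X⟧) ^ (M * k + a)) ?_
  simp_rw [order_neg, order_X_pow]
  refine ENat.tendsto_nhds_top_iff_natCast_lt.2 fun n => ?_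
  filter_upwards [eventually_gt_atTop n] with k hk
  have : n < M * k + a := by nlinarith
  exact_mod_cast this

lemma phi_tendsto {M : ℕ} (hM : 0 < M) (a : ℕ) :
    Tendsto (fun n => ∏ k ∈ Finset.range n, ((1 : ℚ⟦X⟧) - X ^ (M * k + a))) atTop
      (nhds (phi M a)) :=
  (phi_mul hM a).hasProd.tendsto_prod_nat

lemma prod_sub_one_dvd (M a n : ℕ) :
    (X : ℚ⟦X⟧) ^ a ∣ ∏ k ∈ Finset.range n, ((1 : ℚ⟦X⟧) - X ^ (M * k + a)) - 1 := by
  induction n with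
  | zero => simp
  | succ n ih =>
    rw [Finset.prod_range_succ]
    obtain ⟨u, hu⟩ := ih
    refine ⟨u - X ^ (M * n) * (X ^ a * u + 1), ?_⟩
    rw [sub_eq_iff_eq_add.1 hu, pow_add]
    ring

lemma phi_sub_one {M : ℕ} (hM : 0 < M) (a : ℕ) : (X : ℚ⟦X⟧) ^ a ∣ phi M a - 1 := by
  rw [X_pow_dvd_iff]
  intro m hm
  have h := tendsto_coeff.1 ((phi_tendsto hM a).sub_const 1) m
  refine tendsto_nhds_unique h (tendsto_const_nhds.congr fun n => ?_)
  exact (X_pow_dvd_iff.1 (prod_sub_one_dvd M a n) m hm).symm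

lemma phi_split {M : ℕ} (hM : 0 < M) (a n : ℕ) :
    phi M a = (∏ k ∈ Finset.range n, ((1 : ℚ⟦X⟧) - X ^ (M * k + a))) * phi M (M * n + a) := by
  have h := phi_mul hM (M * n + a)
  have e (k : ℕ) : M * k + (M * n + a) = M * (k + n) + a := by ring
  rw [phi, phi]
  simp only [e] at h ⊢
  exact (Multipliable.prod_mul_tprod_nat_mul' (f := fun k => (1 : ℚ⟦X⟧) - X ^ (M * k + a)) h).symm

lemma phi_const {M a : ℕ} (hM : 0 < M) (ha : 0 < a) : constantCoeff (phi M a) = 1 := by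
  have := X_pow_dvd_iff.1 (phi_sub_one hM a) 0 ha
  rw [map_sub, sub_eq_zero] at this
  simpa using this

lemma phi_ne {M a : ℕ} (hM : 0 < M) (ha : 0 < a) : phi M a ≠ 0 := fun h => by
  have := phi_const hM ha
  rw [h, map_zero] at this
  exact zero_ne_one this

/-- `1/(X^M; X^M)_m` as a power series, zero for negative `m`. -/
noncomputable def ipR (M : ℕ) (m : ℤ) : ℚ⟦X⟧ :=
  if m < 0 then 0 else (∏ k ∈ Finset.range m.toNat, (1 - X ^ (M * k + M)))⁻¹

lemma prod_const (M a n : ℕ) (ha : 0 < a) :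
    constantCoeff (∏ k ∈ Finset.range n, ((1 : ℚ⟦X⟧) - X ^ (M * k + a))) = 1 := by
  rw [map_prod]
  refine Finset.prod_eq_one fun k _ => ?_
  simp [show M * k + a ≠ 0 by positivity, -Nat.add_eq_zero_iff]

lemma ipR_dvd {M : ℕ} (hM : 0 < M) (m : ℤ) :
    (X : ℚ⟦X⟧) ^ m.toNat ∣ ipR M m - (phi M M)⁻¹ := by
  rcases lt_or_ge m 0 with h | h
  · rw [Int.toNat_of_nonpos h.le, pow_zero]; exact one_dvd _
  · lift m to ℕ using h
    rw [ipR, if_neg (by omega), Int.toNat_natCast]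
    set a := ∏ k ∈ Finset.range m, ((1 : ℚ⟦X⟧) - X ^ (M * k + M)) with ha
    have h1 : a * a⁻¹ = 1 := PowerSeries.mul_inv_cancel _ (by rw [ha, prod_const M M m hM]; simp)
    have h2 : phi M M * (phi M M)⁻¹ = 1 :=
      PowerSeries.mul_inv_cancel _ (by rw [phi_const hM hM]; simp)
    have h3 : (X : ℚ⟦X⟧) ^ m ∣ phi M (M * m + M) - 1 :=
      (pow_dvd_pow _ (by nlinarith)).trans (phi_sub_one hM _)
    obtain ⟨u, hu⟩ := h3
    have h4 := phi_split hM M m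
    rw [← ha] at h4
    refine ⟨u * (phi M M)⁻¹, ?_⟩
    linear_combination (-a⁻¹) * h2 + (a⁻¹ * (phi M M)⁻¹) * h4
      + (phi M (M * m + M) * (phi M M)⁻¹) * h1 + (phi M M)⁻¹ * hu

end Limits

section FractionField
open PowerSeries

/-- The field of fractions of the power series ring. -/
abbrev FK : Type := FractionRing ℚ⟦X⟧

/-- The image of `X` in the field of fractions. -/
noncomputable def xK : FK := algebraMap ℚ⟦X⟧ FK X

lemma xK_ne : xK ≠ 0 := by
  rw [xK, map_ne_zero_iff _ (IsFractionRing.injective _ _)]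
  exact X_ne_zero

lemma xK_pow (n : ℕ) (hn : 0 < n) : xK ^ n ≠ 1 := by
  rw [xK, ← map_pow, ← map_one (algebraMap ℚ⟦X⟧ FK)]
  intro h
  have := congrArg constantCoeff (IsFractionRing.injective _ _ h)
  simp [hn.ne'] at this

lemma alg_inv {a : ℚ⟦X⟧} (ha : constantCoeff a ≠ 0) :
    algebraMap ℚ⟦X⟧ FK a⁻¹ = (algebraMap ℚ⟦X⟧ FK a)⁻¹ := by
  refine eq_inv_of_mul_eq_one_left ?_
  rw [← map_mul, PowerSeries.inv_mul_cancel _ ha, map_one]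

lemma alg_ipR {M : ℕ} (hM : 0 < M) (m : ℤ) : algebraMap ℚ⟦X⟧ FK (ipR M m) = ip (xK ^ M) m := by
  rw [ipR, ip]
  split_ifs with h
  · simp
  · rw [alg_inv (by rw [prod_const M M _ hM]; simp), map_prod]
    congr 1
    refine Finset.prod_congr rfl fun k _ => ?_
    rw [map_sub, map_one, map_pow, ← pow_mul, xK]
    congr 1

instance : CharZero ℚ⟦X⟧ := algebraRat.charZero _

instance : CharZero FK := charZero_of_injective_algebraMap (IsFractionRing.injective ℚ⟦X⟧ FK)

/-- The bounded identity for all profiles of level five. -/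
lemma bounded_identity (N : ℕ) (c : Prof) : sumB xK N c = weylP xK N c := by
  refine congrFun (sys_unique (R := ℚ⟦X⟧) (p := X) ?_ (sumB_sys xK_ne xK_pow)
    (weylP_sys xK_ne xK_pow) ?_ N) c
  · intro r hr
    ext d
    rw [X_pow_dvd_iff.1 (hr (d + 1)) d (by omega), map_zero]
  · ext c
    rw [sumB_zero, weylP_zero]

end FractionField

/-! ### The limit of the sum side -/

section SumLimit
open PowerSeries Filter

lemma alg_finsum {ι : Type*} (f : ι → ℚ⟦X⟧) :
    algebraMap ℚ⟦X⟧ FK (∑ᶠ i, f i) = ∑ᶠ i, algebraMap ℚ⟦X⟧ FK (f i) :=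
  (algebraMap ℚ⟦X⟧ FK).toAddMonoidHom.map_finsum_of_injective (IsFractionRing.injective _ _) f

lemma alg_ip1 (m : ℤ) : algebraMap ℚ⟦X⟧ FK (ipR 1 m) = ip xK m := by
  rw [alg_ipR one_pos, pow_one]

lemma qPoch_const (n : ℕ) : constantCoeff (qPoch n) = 1 := by
  rw [qPoch, map_prod]
  exact Finset.prod_eq_one fun k _ => by simp [q]

lemma alg_qPoch (n : ℕ) : algebraMap ℚ⟦X⟧ FK (qPoch n) = (ip xK n)⁻¹ := by
  rw [ip_nat, inv_inv, qPoch, map_prod]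
  refine Finset.prod_congr rfl fun k _ => ?_
  rw [map_sub, map_one, map_pow, xK, q]

lemma alg_qBinom (m k : ℕ) : algebraMap ℚ⟦X⟧ FK (qBinom m k)
    = (ip xK m)⁻¹ * (ip xK k * ip xK (m - k)) := by
  rw [qBinom]
  split_ifs with h
  · rw [map_mul, alg_inv (by rw [map_mul, qPoch_const, qPoch_const]; norm_num), map_mul, alg_qPoch,
      alg_qPoch, alg_qPoch, mul_inv, inv_inv, inv_inv, Nat.cast_sub h]
  · rw [ip_neg xK (show (m : ℤ) - k < 0 by omega)]; simp

/-- Exponent in the summand of the quadruple sum, as written with truncated subtraction (which is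
harmless, as `n₂ ≤ n₁` wherever the summand is nonzero). -/
def expo (n : ℕ × ℕ × ℕ × ℕ) : ℕ :=
  n.1 ^ 2 + n.2.1 ^ 2 + n.2.2.1 ^ 2 + n.2.2.2 ^ 2 + n.1 + n.2.1 * n.2.2.2 - n.1 * n.2.1

/-- The `q`-binomial part of the summand of the quadruple sum. -/
noncomputable def coef (n : ℕ × ℕ × ℕ × ℕ) : ℚ⟦X⟧ :=
  (qPoch n.1)⁻¹ * qBinom n.1 n.2.1 * qBinom n.1 n.2.2.2 * qBinom n.2.1 n.2.2.1

/-- The two correction terms in the summand of the quadruple sum. -/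
noncomputable def corr (n : ℕ × ℕ × ℕ × ℕ) : ℚ⟦X⟧ :=
  X ^ (n.1 + n.2.2.1 + 1) + X ^ (2 * n.1 + n.2.1 + n.2.2.1 + n.2.2.2 + 2)

/-- The summand of the bounded sum side, as a power series. -/
noncomputable def sR (N : ℕ) (n : ℕ × ℕ × ℕ × ℕ) : ℚ⟦X⟧ :=
  X ^ expo n * (ipR 1 (N - n.1) + corr n * ipR 1 (N - 1 - n.1)) * coef n

/-- The summand of the bounded sum side over the integers. -/
noncomputable def sK (N : ℤ) (n : ℤ × ℤ × ℤ × ℤ) : FK :=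
  (ip xK n.1)⁻¹ * uT xK n.1 0 0 0 n.2 * (xK ^ n.1 * ip xK (N - n.1)
    + (xK ^ (1 + 2 * n.1 + n.2.2.1) + xK ^ (2 + 3 * n.1 + n.2.1 + n.2.2.1 + n.2.2.2))
      * ip xK (N - 1 - n.1))

lemma sK_bounds {N : ℤ} {n : ℤ × ℤ × ℤ × ℤ} (h : sK N n ≠ 0) :
    0 ≤ n.2.2.1 ∧ n.2.2.1 ≤ n.2.1 ∧ n.2.1 ≤ n.1 ∧ 0 ≤ n.2.2.2 ∧ n.2.2.2 ≤ n.1 ∧ n.1 ≤ N := by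
  rw [sK, mul_ne_zero_iff, mul_ne_zero_iff] at h
  have h1 := uT_bounds h.1.2
  have h2 : n.1 ≤ N := by
    by_contra h3
    exact h.2 (by rw [ip_neg xK (by omega), ip_neg xK (by omega)]; ring)
  exact ⟨h1.1, h1.2.1, h1.2.2.1, h1.2.2.2.1, h1.2.2.2.2, h2⟩

lemma sK_fin (N : ℤ) : (Function.support (sK N)).Finite := by
  refine ((Finset.Icc (0 : ℤ) N) ×ˢ (Finset.Icc (0 : ℤ) N) ×ˢ (Finset.Icc (0 : ℤ) N) ×ˢ
    (Finset.Icc (0 : ℤ) N)).finite_toSet.subset ?_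
  intro t ht
  have := sK_bounds ht
  simp only [Finset.coe_product, Finset.coe_Icc, Set.mem_prod, Set.mem_Icc]
  omega

lemma uS_comb (n b c d b' c' d' : ℤ) (α β γ : FK) :
    α * uS xK n 0 0 0 + β * uS xK n b c d + γ * uS xK n b' c' d' = ∑ᶠ t, uT xK n 0 0 0 t
      * (α + β * xK ^ (b * t.1 + c * t.2.1 + d * t.2.2)
        + γ * xK ^ (b' * t.1 + c' * t.2.1 + d' * t.2.2)) := by
  have h1 := uS_lin2 xK n 0 0 0 n b c d α β
  have fin : (Function.support fun t => α * uT xK n 0 0 0 t + β * uT xK n b c d t).Finite := by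
    refine (uT_fin xK n 0 0 0).subset fun t ht h0 => ht ?_
    change uT xK n 0 0 0 t = 0 at h0
    dsimp only
    rw [uT_weights xK_ne n 0 0 0 b c d, h0]
    ring
  have h2 := finsum_lin2 fin (uT_fin xK n b' c' d') 1 γ
  rw [← h1, ← uS] at h2
  rw [one_mul] at h2
  rw [h2]
  refine finsum_congr fun t => ?_
  rw [uT_weights xK_ne n 0 0 0 b c d, uT_weights xK_ne n 0 0 0 b' c' d']
  simp only [sub_zero]
  ring

/-- For the profile `(3, 0, 2)` the shift `n ↦ n - 1` in `sumCoef` is absorbed into `1/(x;x)_(N-1-n)`,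
which turns the bounded sum side into a single quadruple sum. -/
lemma sumB_eq_sK (N : ℤ) : sumB xK N .c302 = ∑ᶠ n, sK N n := by
  rw [finsum_curry _ (sK_fin N), sumB]
  have nn (b c d : ℤ) : ∀ n < 0, pS xK n b c d = 0 := fun n hn => by rw [pS_of_neg xK hn]
  obtain ⟨f, hf⟩ : ∃ f : ℤ → FK, ∀ m, f m = xK ^ (1 + 2 * m) * pS xK m 0 1 0
    + xK ^ (2 + 3 * m) * pS xK m 1 1 1 := ⟨_, fun _ => rfl⟩
  have e : (fun n => gS xK n .c302) = fun n => 1 * (xK ^ n * pS xK n 0 0 0)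
      + 1 * f (n - 1) := by
    ext n
    have h2 : xK ^ (1 + 2 * (n - 1)) = xK * (xK ^ (n - 1)) ^ 2 := by
      rw [zpow_one_add₀ xK_ne, mul_comm 2, zpow_mul]; norm_cast
    have h3 : xK ^ (2 + 3 * (n - 1)) = xK ^ 2 * (xK ^ (n - 1)) ^ 3 := by
      rw [zpow_add₀ xK_ne, mul_comm 3, zpow_mul]; norm_cast
    simp only [gS, sumCoef]
    rw [hf, h2, h3]
    ring
  have n1 : ∀ n < 0, xK ^ n * pS xK n 0 0 0 = 0 := fun n hn => by rw [nn 0 0 0 n hn, mul_zero]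
  have n2 : ∀ n < 0, f n = 0 :=
    fun n hn => by rw [hf, nn 0 1 0 n hn, nn 1 1 1 n hn, mul_zero, mul_zero, add_zero]
  rw [e, cv_lin2 xK n1 (fun n hn => n2 (n - 1) (by omega)), cv_shift, cv, cv,
    finsum_lin2 (cv_support xK n1 N) (cv_support xK n2 (N - 1))]
  refine finsum_congr fun n => ?_
  have h := uS_comb n 0 1 0 1 1 1 (xK ^ n * ip xK (N - n))
    (xK ^ (1 + 2 * n) * ip xK (N - 1 - n)) (xK ^ (2 + 3 * n) * ip xK (N - 1 - n))
  have h' : ∑ᶠ t, sK N (n, t) = (ip xK n)⁻¹ * (xK ^ n * ip xK (N - n) * uS xK n 0 0 0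
      + xK ^ (1 + 2 * n) * ip xK (N - 1 - n) * uS xK n 0 1 0
      + xK ^ (2 + 3 * n) * ip xK (N - 1 - n) * uS xK n 1 1 1) := by
    rw [h, mul_finsum]
    refine finsum_congr fun ⟨i, j, l⟩ => ?_
    simp only [sK]
    rw [show 0 * i + 1 * j + 0 * l = j by ring, show 1 * i + 1 * j + 1 * l = i + j + l by ring,
      show 2 + 3 * n + i + j + l = 2 + 3 * n + (i + j + l) by ring, zpow_add₀ xK_ne _ j,
      zpow_add₀ xK_ne _ (i + j + l)]
    ring
  rw [h', hf, pS, pS, pS]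
  ring

/-- The inclusion of the index set of the quadruple sum. -/
def incl (n : ℕ × ℕ × ℕ × ℕ) : ℤ × ℤ × ℤ × ℤ := (n.1, n.2.1, n.2.2.1, n.2.2.2)

lemma incl_inj : Function.Injective incl := by
  rintro ⟨a, b, c, d⟩ ⟨a', b', c', d'⟩ h
  simpa [incl] using h

lemma alg_sR (N : ℕ) (n : ℕ × ℕ × ℕ × ℕ) : algebraMap ℚ⟦X⟧ FK (sR N n) = sK N (incl n) := by
  obtain ⟨a, b, c, d⟩ := n
  simp only [sR, sK, incl, coef, corr, map_mul, map_add, map_pow, alg_ip1, alg_qBinom,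
    alg_inv (show constantCoeff (qPoch a) ≠ 0 by rw [qPoch_const]; norm_num), alg_qPoch]
  simp only [← xK.eq_1]
  by_cases hba : b ≤ a
  swap
  · rw [uT, ip_neg xK (show (a : ℤ) - b < 0 by omega)]
    ring
  have ha := ip_ne_zero xK_pow (show 0 ≤ (a : ℤ) by omega)
  have hb := ip_ne_zero xK_pow (show 0 ≤ (b : ℤ) by omega)
  have hE : (expo (a, b, c, d) : ℤ) = a ^ 2 + b ^ 2 + c ^ 2 + d ^ 2 - a * b + b * d + 0 * b
      + 0 * c + 0 * d + a := by
    simp only [expo]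
    rw [Nat.cast_sub]
    · push_cast; ring
    · nlinarith
  rw [← zpow_natCast xK (expo (a, b, c, d)), hE, zpow_add₀ xK_ne, uT, ← zpow_natCast xK (a + c + 1),
    ← zpow_natCast xK (2 * a + b + c + d + 2)]
  have e1 : xK ^ (1 + 2 * (a : ℤ) + c) = xK ^ (a : ℤ) * xK ^ ((a + c + 1 : ℕ) : ℤ) := by
    rw [← zpow_add₀ xK_ne]; congr 1; push_cast; ring
  have e2 : xK ^ (2 + 3 * (a : ℤ) + b + c + d)
      = xK ^ (a : ℤ) * xK ^ ((2 * a + b + c + d + 2 : ℕ) : ℤ) := by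
    rw [← zpow_add₀ xK_ne]; congr 1; push_cast; ring
  rw [e1, e2]
  field_simp

lemma sR_fin (N : ℕ) : (Function.support (sR N)).Finite := by
  refine ((sK_fin N).preimage incl_inj.injOn).subset fun n hn => ?_
  simp only [Set.mem_preimage, Function.mem_support]
  rw [← alg_sR]
  exact fun h => hn ((map_eq_zero_iff _ (IsFractionRing.injective _ _)).1 h)

lemma alg_sum_sR (N : ℕ) : algebraMap ℚ⟦X⟧ FK (∑ᶠ n, sR N n) = sumB xK N .c302 := by
  rw [alg_finsum, sumB_eq_sK]
  simp only [alg_sR]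
  rw [← finsum_mem_range (f := sK N) incl_inj, ← finsum_mem_univ (sK N)]
  apply finsum_mem_inter_support_eq
  ext n
  simp only [Set.univ_inter, Set.mem_inter_iff, Set.mem_range, Function.mem_support]
  refine ⟨fun h => h.2, fun h => ⟨?_, h⟩⟩
  have := sK_bounds h
  refine ⟨(n.1.toNat, n.2.1.toNat, n.2.2.1.toNat, n.2.2.2.toNat), ?_⟩
  simp only [incl]
  ext <;> simp <;> omega

/-- `X`-adic convergence of the bounded summand, uniformly in the index. -/
lemma sR_dvd (N : ℕ) (n : ℕ × ℕ × ℕ × ℕ) : (X : ℚ⟦X⟧) ^ (N - 1)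
    ∣ sR N n - X ^ expo n * (1 + corr n) * coef n * (phi 1 1)⁻¹ := by
  obtain ⟨a, b, c, d⟩ := n
  by_cases hba : b ≤ a
  swap
  · have : coef (a, b, c, d) = 0 := by simp [coef, qBinom, hba]
    simp [sR, this]
  have hE : a ≤ expo (a, b, c, d) := by
    simp only [expo]
    have : a * b ≤ a ^ 2 := by nlinarith
    omega
  obtain ⟨u, hu⟩ := ipR_dvd one_pos ((N : ℤ) - a)
  obtain ⟨v, hv⟩ := ipR_dvd one_pos ((N : ℤ) - 1 - a)
  have h1 : (X : ℚ⟦X⟧) ^ (N - 1) ∣ X ^ expo (a, b, c, d) * X ^ ((N : ℤ) - a).toNat := by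
    rw [← pow_add]; exact pow_dvd_pow _ (by omega)
  have h2 : (X : ℚ⟦X⟧) ^ (N - 1) ∣ X ^ expo (a, b, c, d) * X ^ ((N : ℤ) - 1 - a).toNat := by
    rw [← pow_add]; exact pow_dvd_pow _ (by omega)
  have h3 := dvd_add (h1.mul_right (u * coef (a, b, c, d)))
    (h2.mul_right (corr (a, b, c, d) * v * coef (a, b, c, d)))
  convert h3 using 1
  rw [sR]
  dsimp only
  linear_combination X ^ expo (a, b, c, d) * coef (a, b, c, d) * hu
    + X ^ expo (a, b, c, d) * coef (a, b, c, d) * corr (a, b, c, d) * hv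

/-- The summand of the quadruple sum. -/
noncomputable def tS (n : ℕ × ℕ × ℕ × ℕ) : ℚ⟦X⟧ := X ^ expo n * (1 + corr n) * coef n

lemma sum_limit : Tendsto (fun N => ∑ᶠ n, sR N n) atTop (nhds ((∑' n, tS n) * (phi 1 1)⁻¹)) := by
  obtain ⟨h1, h2⟩ := lim_sum sR_fin 1 sR_dvd
  have h3 : (phi 1 1)⁻¹ * phi 1 1 = 1 :=
    PowerSeries.inv_mul_cancel _ (by rw [phi_const one_pos one_pos]; norm_num)
  have h4 : Summable tS := by
    refine (h1.mul_right (phi 1 1)).congr fun n => ?_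
    rw [mul_assoc, h3, mul_one, tS]
  rwa [← h4.tsum_mul_right]

end SumLimit

/-! ### The limit of the alternating sum -/

section WeylLimit
open PowerSeries Filter

/-- Exponent of the theta series of type `A₂`. -/
def expoT (y : ℤ × ℤ) : ℤ := 8 * quad y + 1 * y.1 + 3 * (y.1 + y.2)

/-- Summand of the theta series of type `A₂`. -/
noncomputable def tT (y : ℤ × ℤ) : ℚ⟦X⟧ := (chi (y.2 - y.1 + 1) : ℚ⟦X⟧) * X ^ (expoT y).toNat

/-- The summand of the bounded Weyl side, as a power series. -/
noncomputable def wR (N : ℕ) (y : ℤ × ℤ) : ℚ⟦X⟧ :=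
  tT y * (ipR 1 (N + y.1) * ipR 1 (N + y.2) * ipR 1 (N - y.1 - y.2))

lemma quad_eq {y : ℤ × ℤ} (h : chi (y.2 - y.1 + 1) ≠ 0) :
    3 * quad y = y.1 ^ 2 + y.1 * y.2 + y.2 ^ 2 - 2 * y.1 - y.2 := by
  rw [quad]
  refine Int.mul_ediv_cancel' ?_
  unfold chi at h
  obtain ⟨d, r, hr, hd⟩ : ∃ d r, y.2 = y.1 + 3 * d + r ∧ (r = 0 ∨ r = 1) := by
    refine ⟨(y.2 - y.1) / 3, (y.2 - y.1) % 3, by omega, ?_⟩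
    split_ifs at h <;> omega
  rw [hr]
  rcases hd with rfl | rfl
  · exact ⟨y.1 ^ 2 + 3 * d * y.1 + 3 * d ^ 2 - y.1 - d, by ring⟩
  · exact ⟨y.1 ^ 2 + y.1 * (3 * d + 1) + 3 * d ^ 2 + d - y.1, by ring⟩

lemma expoT_nonneg {y : ℤ × ℤ} (h : chi (y.2 - y.1 + 1) ≠ 0) : 0 ≤ expoT y := by
  have h1 := quad_eq h
  have h2 : 3 * expoT y = 8 * (y.1 ^ 2 + y.1 * y.2 + y.2 ^ 2) - 4 * y.1 + y.2 := by
    rw [expoT]; linear_combination 8 * h1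
  have h3 : 0 ≤ y.1 ^ 2 - y.1 := by
    rcases le_or_gt y.1 0 with h | h <;> nlinarith
  have h4 : 0 ≤ 4 * y.2 ^ 2 + y.2 := by
    rcases lt_or_ge y.2 0 with h | h <;> nlinarith
  nlinarith [sq_nonneg (y.1 + y.2)]

/-- The quadratic form dominates the linear forms that occur in the denominators of `wT`. -/
lemma expoT_bound {y : ℤ × ℤ} (h : chi (y.2 - y.1 + 1) ≠ 0) :
    -10 ≤ expoT y + y.1 ∧ -10 ≤ expoT y + y.2 ∧ -10 ≤ expoT y - y.1 - y.2 := by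
  have h1 := quad_eq h
  have h2 : 3 * expoT y = 8 * (y.1 ^ 2 + y.1 * y.2 + y.2 ^ 2) - 4 * y.1 + y.2 := by
    rw [expoT]; linear_combination 8 * h1
  refine ⟨?_, ?_, ?_⟩ <;>
    nlinarith [sq_nonneg (y.1 + y.2), sq_nonneg (y.1 - 1), sq_nonneg (y.2 - 1),
      sq_nonneg (y.2 + 1)]

lemma alg_wR (N : ℕ) (y : ℤ × ℤ) : algebraMap ℚ⟦X⟧ FK (wR N y) = wT xK 1 3 N y := by
  simp only [wR, tT, wT, mon, map_mul, alg_ip1, map_intCast, map_pow, ← xK.eq_1]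
  by_cases h : chi (y.2 - y.1 + 1) = 0
  · simp [h]
  · rw [← zpow_natCast, Int.toNat_of_nonneg (expoT_nonneg h), expoT]

lemma wR_fin (N : ℕ) : (Function.support (wR N)).Finite := by
  refine (wT_fin xK 1 3 N).subset fun y hy => ?_
  simp only [Function.mem_support]
  rw [← alg_wR]
  exact fun h => hy ((map_eq_zero_iff _ (IsFractionRing.injective _ _)).1 h)

lemma alg_sum_wR (N : ℕ) : algebraMap ℚ⟦X⟧ FK (∑ᶠ y, wR N y) = weylP xK N .c302 := by
  rw [alg_finsum]
  exact finsum_congr fun y => alg_wR N y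

/-- `X`-adic convergence of the bounded summand, uniformly in the index: `expoT` dominates the linear
forms `-y₁`, `-y₂`, `y₁ + y₂` up to a constant. -/
lemma wR_dvd (N : ℕ) (y : ℤ × ℤ) :
    (X : ℚ⟦X⟧) ^ (N - 10) ∣ wR N y - tT y * (phi 1 1)⁻¹ ^ 3 := by
  by_cases h : chi (y.2 - y.1 + 1) = 0
  · simp [wR, tT, h]
  have h0 := expoT_nonneg h
  obtain ⟨b1, b2, b3⟩ := expoT_bound h
  obtain ⟨u, hu⟩ := ipR_dvd one_pos ((N : ℤ) + y.1)
  obtain ⟨v, hv⟩ := ipR_dvd one_pos ((N : ℤ) + y.2)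
  obtain ⟨w, hw⟩ := ipR_dvd one_pos ((N : ℤ) - y.1 - y.2)
  have d (m : ℤ) (hm : (N : ℤ) - 10 ≤ expoT y + m) :
      (X : ℚ⟦X⟧) ^ (N - 10) ∣ tT y * X ^ m.toNat := by
    rw [tT, mul_assoc, ← pow_add]
    exact (pow_dvd_pow _ (by omega)).mul_left _
  have h3 := dvd_add (dvd_add
    ((d _ (show (N : ℤ) - 10 ≤ expoT y + (N + y.1) by omega)).mul_right
      (u * (ipR 1 (N + y.2) * ipR 1 (N - y.1 - y.2))))
    ((d _ (show (N : ℤ) - 10 ≤ expoT y + (N + y.2) by omega)).mul_right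
      ((phi 1 1)⁻¹ * (v * ipR 1 (N - y.1 - y.2)))))
    ((d _ (show (N : ℤ) - 10 ≤ expoT y + (N - y.1 - y.2) by omega)).mul_right
      ((phi 1 1)⁻¹ ^ 2 * w))
  convert h3 using 1
  rw [wR]
  linear_combination tT y * (ipR 1 (N + y.2) * ipR 1 (N - y.1 - y.2)) * hu
    + tT y * (phi 1 1)⁻¹ * ipR 1 (N - y.1 - y.2) * hv + tT y * (phi 1 1)⁻¹ ^ 2 * hw

/-- The bounded identity in the limit. -/
lemma limit_identity : (∑' n, tS n) * phi 1 1 ^ 2 = ∑' y, tT y := by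
  obtain ⟨h1, h2⟩ := lim_sum wR_fin 10 wR_dvd
  have h3 : (phi 1 1)⁻¹ * phi 1 1 = 1 :=
    PowerSeries.inv_mul_cancel _ (by rw [phi_const one_pos one_pos]; norm_num)
  have h4 : Summable tT := by
    refine (h1.mul_right (phi 1 1 ^ 3)).congr fun n => ?_
    rw [mul_assoc, ← mul_pow, h3, one_pow, mul_one]
  rw [h4.tsum_mul_right] at h2
  have h5 := sum_limit
  have h6 (N : ℕ) : ∑ᶠ n, sR N n = ∑ᶠ y, wR N y := by
    apply IsFractionRing.injective ℚ⟦X⟧ FK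
    rw [alg_sum_sR, alg_sum_wR, bounded_identity]
  simp only [h6] at h5
  have h7 := tendsto_nhds_unique h5 h2
  linear_combination phi 1 1 ^ 3 * h7 - (∑' n, tS n) * phi 1 1 ^ 2 * h3
    + (∑' y, tT y) * ((((phi 1 1)⁻¹ * phi 1 1) ^ 2 + (phi 1 1)⁻¹ * phi 1 1 + 1)) * h3

end WeylLimit

/-! ### The Jacobi triple product -/

section FiniteJacobi
variable {K : Type*} [Field K]

/-- The sign `(-1)^i`. -/
def sg (i : ℤ) : ℤ := (i.negOnePow : ℤ)

lemma sg_zero : sg 0 = 1 := by simp [sg]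

lemma sg_add (i j : ℤ) : sg (i + j) = sg i * sg j := by simp [sg, Int.negOnePow_add]

lemma sg_succ (i : ℤ) : sg (i + 1) = -sg i := by simp [sg, Int.negOnePow_succ]

lemma sg_neg (i : ℤ) : sg (-i) = sg i := by simp [sg, Int.negOnePow_neg]

lemma sg_mul_self (i : ℤ) : sg i * sg i = 1 := by
  rw [← sg_add, sg, Int.negOnePow_even _ ⟨i, rfl⟩]; rfl

/-- The triangular number `i (i - 1) / 2`. -/
def tri (i : ℤ) : ℤ := i * (i - 1) / 2

lemma two_tri (i : ℤ) : 2 * tri i = i * (i - 1) :=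
  Int.mul_ediv_cancel' (Int.even_mul_pred_self i).two_dvd

lemma tri_succ (i : ℤ) : tri (i + 1) = tri i + i := by
  have h1 := two_tri i
  have h2 := two_tri (i + 1)
  linarith

/-- Summand of `jac`. -/
noncomputable def jT (p x : K) (n i : ℤ) : K :=
  sg i * (x ^ i * p ^ tri i) * (ip p (n + i) * ip p (n - i))

/-- The finite form of the theta series in the Jacobi triple product. -/
noncomputable def jac (p x : K) (n : ℤ) : K := ∑ᶠ i, jT p x n i

lemma jT_fin (p x : K) (n : ℤ) : (Function.support (jT p x n)).Finite := by
  refine (Set.finite_Icc (-n) n).subset fun i hi => ?_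
  simp only [jT, Function.mem_support, mul_ne_zero_iff] at hi
  have h1 := nonneg_of_ip_ne p hi.2.1
  have h2 := nonneg_of_ip_ne p hi.2.2
  exact ⟨by omega, by omega⟩

lemma jac_zero (p x : K) : jac p x 0 = 1 := by
  rw [jac, finsum_eq_single _ 0]
  · simp [jT, sg_zero, tri]
  · intro i hi
    by_contra h
    simp only [jT, mul_ne_zero_iff] at h
    have h1 := nonneg_of_ip_ne p h.2.1
    have h2 := nonneg_of_ip_ne p h.2.2
    omega

variable {p x : K} (hp0 : p ≠ 0) (hp : ∀ n : ℕ, 0 < n → p ^ n ≠ 1) (hx : x ≠ 0)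
include hp0 hp hx

/-- Recurrence for the finite theta series, from expanding `(1 - p^(n+i)) (1 - p^(n-i))` and its
predecessor. -/
lemma jac_rec (n : ℤ) : (1 - p ^ (2 * n)) * (1 - p ^ (2 * n - 1)) * jac p x n
    = (1 - x * p ^ (n - 1)) * (1 - p ^ n / x) * jac p x (n - 1) := by
  have s1 : jac p x (n - 1) = ∑ᶠ i, jT p x (n - 1) (i + (-1)) :=
    (finsum_comp_equiv (Equiv.addRight (-1 : ℤ))).symm
  have s2 : jac p x (n - 1) = ∑ᶠ i, jT p x (n - 1) (i + 1) :=
    (finsum_comp_equiv (Equiv.addRight (1 : ℤ))).symm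
  have f1 : (Function.support fun i => jT p x (n - 1) (i + (-1))).Finite :=
    (jT_fin p x (n - 1)).preimage (add_left_injective (-1 : ℤ)).injOn
  have f2 : (Function.support fun i => jT p x (n - 1) (i + 1)).Finite :=
    (jT_fin p x (n - 1)).preimage (add_left_injective (1 : ℤ)).injOn
  have l1 := finsum_lin2 f1 f2 (-(x * p ^ (n - 1))) (-(p ^ n / x))
  rw [← s1, ← s2] at l1
  have f3 : (Function.support fun i => -(x * p ^ (n - 1)) * jT p x (n - 1) (i + (-1))
      + -(p ^ n / x) * jT p x (n - 1) (i + 1)).Finite :=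
    (f1.union f2).subset fun y hy => by
      by_contra h
      simp only [Set.mem_union, Function.mem_support, not_or, not_not] at h
      simp [h.1, h.2] at hy
  have l2 := finsum_lin2 (jT_fin p x (n - 1)) f3 (1 + p ^ (n - 1) * p ^ n) 1
  rw [← l1, ← jac] at l2
  have l3 : (1 - x * p ^ (n - 1)) * (1 - p ^ n / x) * jac p x (n - 1) = _ :=
    Eq.trans (by field_simp; ring) l2
  rw [l3, jac, mul_finsum]
  refine finsum_congr fun i => ?_
  have h1 := ip_rec hp (n + i)
  have h2 := ip_rec hp (n - i)
  have h3 := ip_rec hp (n + i - 1)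
  have h4 := ip_rec hp (n - i - 1)
  have t1 := tri_succ i
  have t2 : tri (i + (-1)) = tri i - (i - 1) := by
    have := tri_succ (i + (-1))
    rw [show i + -1 + 1 = i by ring] at this
    linarith
  have g1 : sg (i + (-1)) = -sg i := by
    have := sg_succ (i + (-1))
    rw [show i + -1 + 1 = i by ring] at this
    rw [this]; ring
  simp only [jT]
  rw [sg_succ, g1, t1, t2, show n - 1 + (i + -1) = n + i - 1 - 1 by ring,
    show n - 1 - (i + -1) = n - i by ring, show n - 1 + (i + 1) = n + i by ring,
    show n - 1 - (i + 1) = n - i - 1 - 1 by ring, show n - 1 + i = n + i - 1 by ring,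
    show n - 1 - i = n - i - 1 by ring, ← h3, ← h4, ← h1, ← h2]
  have zi := zpow_ne_zero i hp0
  have zn := zpow_ne_zero n hp0
  rw [show 2 * n - 1 = n + n - 1 by ring, show 2 * n = n + n by ring,
    show tri i - (i - 1) = tri i - i + 1 by ring]
  simp only [zpow_add₀ hp0, zpow_sub₀ hp0, zpow_add₀ hx, zpow_neg, zpow_one]
  push_cast
  field_simp
  ring

/-- The finite Jacobi triple product. -/
lemma jac_eq (n : ℕ) : jac p x n = ip p (2 * n)
    * ∏ k ∈ Finset.range n, ((1 - x * p ^ k) * (1 - p ^ (k + 1) / x)) := by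
  induction n with
  | zero => simpa using jac_zero p x
  | succ n ih =>
    have h := jac_rec hp0 hp hx (n + 1 : ℕ)
    have e : ((n + 1 : ℕ) : ℤ) - 1 = n := by push_cast; ring
    have h1 := ip_rec hp (2 * (n + 1 : ℕ))
    have h2 := ip_rec hp (2 * (n + 1 : ℕ) - 1)
    rw [show 2 * ((n + 1 : ℕ) : ℤ) - 1 - 1 = 2 * n by push_cast; ring] at h2
    have n1 : 1 - p ^ (2 * ((n + 1 : ℕ) : ℤ)) ≠ 0 :=
      sub_ne_zero.2 fun h => hp (2 * (n + 1)) (by omega) (by rw [h]; norm_cast)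
    have n2 : 1 - p ^ (2 * ((n + 1 : ℕ) : ℤ) - 1) ≠ 0 := by
      refine sub_ne_zero.2 fun h => hp (2 * n + 1) (by omega) ?_
      rw [h, ← zpow_natCast]; congr 1; push_cast; ring
    refine mul_left_cancel₀ (mul_ne_zero n1 n2) ?_
    rw [h, e, ih, Finset.prod_range_succ, ← h2, ← h1, zpow_natCast, zpow_natCast]
    ring

end FiniteJacobi

section Jacobi
open PowerSeries Filter

/-- Exponent in the theta series of the Jacobi triple product. -/
def expoJ (M a : ℕ) (i : ℤ) : ℤ := M * tri i + a * i

/-- Summand of the theta series of the Jacobi triple product. -/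
noncomputable def tJ (M a : ℕ) (i : ℤ) : ℚ⟦X⟧ := (sg i : ℚ⟦X⟧) * X ^ (expoJ M a i).toNat

/-- Summand of the finite theta series, as a power series. -/
noncomputable def jR (M a : ℕ) (N : ℕ) (i : ℤ) : ℚ⟦X⟧ :=
  tJ M a i * (ipR M (N + i) * ipR M (N - i))

lemma expoJ_bound {M a : ℕ} (ha : 0 < a) (haM : a < M) (i : ℤ) :
    i ≤ expoJ M a i ∧ -i ≤ expoJ M a i := by
  have h := two_tri i
  have h1 : (1 : ℤ) ≤ a := by exact_mod_cast ha
  have h2 : (a : ℤ) + 1 ≤ M := by exact_mod_cast haM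
  have e : 2 * expoJ M a i = M * (i * (i - 1)) + 2 * a * i := by
    rw [expoJ]; linear_combination (M : ℤ) * h
  rcases le_or_gt i 0 with hi | hi
  · have h3 : 0 ≤ i * (i + 1) := by
      rcases eq_or_lt_of_le hi with h | h
      · simp [h]
      · exact mul_nonneg_of_nonpos_of_nonpos hi (by omega)
    have h4 : 0 ≤ (M : ℤ) * (i * (i + 1)) := by positivity
    have : -i ≤ expoJ M a i := by nlinarith
    omega
  · have h3 : 0 ≤ i * (i - 1) := mul_nonneg hi.le (by omega)
    have h4 : 0 ≤ (M : ℤ) * (i * (i - 1)) := by positivity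
    have : i ≤ expoJ M a i := by nlinarith
    omega

lemma alg_jR {M a : ℕ} (ha : 0 < a) (haM : a < M) (N : ℕ) (i : ℤ) :
    algebraMap ℚ⟦X⟧ FK (jR M a N i) = jT (xK ^ M) (xK ^ a) N i := by
  have h := expoJ_bound ha haM i
  simp only [jR, tJ, jT, map_mul, alg_ipR (ha.trans haM), map_intCast, map_pow, ← xK.eq_1]
  rw [← zpow_natCast, Int.toNat_of_nonneg (by omega), expoJ, add_comm, zpow_add₀ xK_ne, zpow_mul,
    zpow_mul, zpow_natCast, zpow_natCast]

lemma jR_fin {M a : ℕ} (ha : 0 < a) (haM : a < M) (N : ℕ) :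
    (Function.support (jR M a N)).Finite := by
  refine (jT_fin (xK ^ M) (xK ^ a) N).subset fun i hi => ?_
  simp only [Function.mem_support]
  rw [← alg_jR ha haM]
  exact fun h => hi ((map_eq_zero_iff _ (IsFractionRing.injective _ _)).1 h)

lemma sum_jR {M a : ℕ} (ha : 0 < a) (haM : a < M) (N : ℕ) : ∑ᶠ i, jR M a N i = ipR M (2 * N)
    * ((∏ k ∈ Finset.range N, (1 - X ^ (M * k + a)))
      * ∏ k ∈ Finset.range N, (1 - X ^ (M * k + (M - a)))) := by
  apply IsFractionRing.injective ℚ⟦X⟧ FK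
  rw [alg_finsum]
  simp only [alg_jR ha haM]
  rw [← jac, jac_eq (pow_ne_zero M xK_ne) _ (pow_ne_zero a xK_ne), ← Finset.prod_mul_distrib,
    map_mul, map_prod, alg_ipR (ha.trans haM)]
  · congr 1
    refine Finset.prod_congr rfl fun k _ => ?_
    simp only [map_mul, map_sub, map_one, map_pow, ← xK.eq_1]
    congr 2
    · ring
    · rw [div_eq_iff (pow_ne_zero a xK_ne), ← pow_add, ← pow_mul]
      congr 1
      rw [add_assoc, Nat.sub_add_cancel haM.le]
      ring
  · intro n hn
    rw [← pow_mul]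
    exact xK_pow _ (Nat.mul_pos (ha.trans haM) hn)

lemma jR_dvd {M a : ℕ} (ha : 0 < a) (haM : a < M) (N : ℕ) (i : ℤ) :
    (X : ℚ⟦X⟧) ^ (N - 0) ∣ jR M a N i - tJ M a i * (phi M M)⁻¹ ^ 2 := by
  have hM : 0 < M := ha.trans haM
  obtain ⟨b1, b2⟩ := expoJ_bound ha haM i
  obtain ⟨u, hu⟩ := ipR_dvd hM ((N : ℤ) + i)
  obtain ⟨v, hv⟩ := ipR_dvd hM ((N : ℤ) - i)
  have d (m : ℤ) (hm : (N : ℤ) ≤ expoJ M a i + m) :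
      (X : ℚ⟦X⟧) ^ (N - 0) ∣ tJ M a i * X ^ m.toNat := by
    rw [tJ, mul_assoc, ← pow_add]
    exact (pow_dvd_pow _ (by omega)).mul_left _
  have h3 := dvd_add ((d _ (show (N : ℤ) ≤ expoJ M a i + (N + i) by omega)).mul_right
      (u * ipR M (N - i)))
    ((d _ (show (N : ℤ) ≤ expoJ M a i + (N - i) by omega)).mul_right ((phi M M)⁻¹ * v))
  convert h3 using 1
  rw [jR]
  linear_combination tJ M a i * ipR M (N - i) * hu + tJ M a i * (phi M M)⁻¹ * hv

lemma ipR_tendsto {M : ℕ} (hM : 0 < M) :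
    Tendsto (fun N : ℕ => ipR M (2 * N)) atTop (nhds (phi M M)⁻¹) := by
  rw [tendsto_coeff]
  intro d
  refine tendsto_const_nhds.congr' ?_
  filter_upwards [eventually_gt_atTop d] with N hN
  have := X_pow_dvd_iff.1 (ipR_dvd hM (2 * N)) d (by omega)
  rw [map_sub, sub_eq_zero] at this
  exact this.symm

/-- The Jacobi triple product identity. -/
lemma jacobi {M a : ℕ} (ha : 0 < a) (haM : a < M) :
    HasSum (tJ M a) (phi M M * phi M a * phi M (M - a)) := by
  have hM : 0 < M := ha.trans haM
  obtain ⟨h1, h2⟩ := lim_sum (jR_fin ha haM) 0 (jR_dvd ha haM)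
  have h3 : (phi M M)⁻¹ * phi M M = 1 :=
    PowerSeries.inv_mul_cancel _ (by rw [phi_const hM hM]; norm_num)
  have h4 : Summable (tJ M a) := by
    refine (h1.mul_right (phi M M ^ 2)).congr fun n => ?_
    rw [mul_assoc, ← mul_pow, h3, one_pow, mul_one]
  rw [h4.tsum_mul_right] at h2
  simp only [sum_jR ha haM] at h2
  have h5 := (ipR_tendsto hM).mul ((phi_tendsto hM a).mul (phi_tendsto hM (M - a)))
  have h6 := tendsto_nhds_unique h5 h2
  have h7 := h4.hasSum
  convert h7 using 1
  linear_combination phi M M ^ 2 * h6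
    + (∑' i, tJ M a i) * ((phi M M)⁻¹ * phi M M + 1) * h3 - phi M M * phi M a * phi M (M - a) * h3

end Jacobi

/-! ### The Macdonald identity and the product side -/

section Macdonald
open PowerSeries Filter

/-- A family of power series is admissible if only finitely many members are nonzero modulo
`X^L`, for every `L`. -/
def Adm {ι : Type*} (G : ι → ℚ⟦X⟧) : Prop := ∀ L : ℕ, {i | ¬ X ^ L ∣ G i}.Finite

lemma Adm.summable {ι : Type*} {G : ι → ℚ⟦X⟧} (h : Adm G) : Summable G := by
  have hs (d : ℕ) : HasSum (fun i => coeff d (G i)) (∑ᶠ i, coeff d (G i)) := by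
    have hfin : (Function.support fun i => coeff d (G i)).Finite :=
      (h (d + 1)).subset fun i hi h0 => hi (X_pow_dvd_iff.1 h0 d (by omega))
    rw [finsum_eq_sum _ hfin]
    exact hasSum_sum_of_ne_finset_zero fun i hi => by simpa using hi
  have hG : HasSum G (PowerSeries.mk fun d => ∑ᶠ i, coeff d (G i)) :=
    hasSum_coeff.2 fun d => by rw [coeff_mk]; exact hs d
  exact hG.summable

lemma Adm.mul {ι κ : Type*} {F : ι → ℚ⟦X⟧} {G : κ → ℚ⟦X⟧} (hF : Adm F) (hG : Adm G) :
    Adm fun x : ι × κ => F x.1 * G x.2 := fun L =>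
  ((hF L).prod (hG L)).subset fun _ hx =>
    ⟨fun h => hx (h.mul_right _), fun h => hx (h.mul_left _)⟩

lemma Adm.comp {ι κ : Type*} {F : ι → ℚ⟦X⟧} (hF : Adm F) {e : κ → ι} (he : e.Injective) :
    Adm fun x => F (e x) := fun L => (hF L).preimage he.injOn

lemma adm_tJ {M a : ℕ} (ha : 0 < a) (haM : a < M) : Adm (tJ M a) := fun L => by
  refine (Set.finite_Icc (-(L : ℤ)) L).subset fun i hi => ?_
  have h := expoJ_bound ha haM i
  by_contra h1
  refine hi ((pow_dvd_pow _ ?_).mul_left _)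
  simp only [Set.mem_Icc, not_and_or, not_le] at h1
  omega

/-- The product of three theta terms, with the indices `i = m - k`, `j = n - k` sheared. -/
noncomputable def tri3 (x : (ℤ × ℤ) × ℤ) : ℚ⟦X⟧ :=
  tJ 8 1 (x.1.1 - x.2) * tJ 8 3 (x.1.2 - x.2) * tJ 8 4 x.2

/-- The shear `((m, n), k) ↦ ((m - k, n - k), k)`. -/
def shear : (ℤ × ℤ) × ℤ ≃ (ℤ × ℤ) × ℤ where
  toFun x := ((x.1.1 - x.2, x.1.2 - x.2), x.2)
  invFun x := ((x.1.1 + x.2, x.1.2 + x.2), x.2)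
  left_inv x := by ext <;> simp
  right_inv x := by ext <;> simp

lemma adm_tri3 : Adm tri3 := by
  have a1 := adm_tJ (M := 8) (a := 1) (by norm_num) (by norm_num)
  have a3 := adm_tJ (M := 8) (a := 3) (by norm_num) (by norm_num)
  have a4 := adm_tJ (M := 8) (a := 4) (by norm_num) (by norm_num)
  have h := (a1.mul a3).mul a4
  exact fun L => ((h L).preimage shear.injective.injOn).subset fun x hx => hx

lemma hasSum_tri3 : HasSum tri3 (phi 8 8 * phi 8 1 * phi 8 7 * (phi 8 8 * phi 8 3 * phi 8 5)
    * (phi 8 8 * phi 8 4 * phi 8 4)) := by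
  have a1 := adm_tJ (M := 8) (a := 1) (by norm_num) (by norm_num)
  have a3 := adm_tJ (M := 8) (a := 3) (by norm_num) (by norm_num)
  have a4 := adm_tJ (M := 8) (a := 4) (by norm_num) (by norm_num)
  have h1 := jacobi (M := 8) (a := 1) (by norm_num) (by norm_num)
  have h3 := jacobi (M := 8) (a := 3) (by norm_num) (by norm_num)
  have h4 := jacobi (M := 8) (a := 4) (by norm_num) (by norm_num)
  have h := (h1.mul h3 (a1.mul a3).summable).mul h4 ((a1.mul a3).mul a4).summable
  exact (shear.hasSum_iff (f := fun x : (ℤ × ℤ) × ℤ => tJ 8 1 x.1.1 * tJ 8 3 x.1.2 * tJ 8 4 x.2)).2 h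

/-- The total exponent of `tri3`. -/
def expo3 (m n k : ℤ) : ℤ := expoJ 8 1 (m - k) + expoJ 8 3 (n - k) + expoJ 8 4 k

lemma tri3_eq (m n k : ℤ) :
    tri3 ((m, n), k) = (sg (m + n + k) : ℚ⟦X⟧) * X ^ (expo3 m n k).toNat := by
  have b1 := expoJ_bound (M := 8) (a := 1) (by norm_num) (by norm_num) (m - k)
  have b2 := expoJ_bound (M := 8) (a := 3) (by norm_num) (by norm_num) (n - k)
  have b3 := expoJ_bound (M := 8) (a := 4) (by norm_num) (by norm_num) k
  have e : (expo3 m n k).toNat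
      = (expoJ 8 1 (m - k)).toNat + (expoJ 8 3 (n - k)).toNat + (expoJ 8 4 k).toNat := by
    rw [expo3]; omega
  have s : sg (m + n + k) = sg (m - k) * sg (n - k) * sg k := by
    rw [show m + n + k = (m - k) + (n - k) + k + (k + k) by ring, sg_add _ (k + k), sg_add k k,
      sg_mul_self, sg_add, sg_add, mul_one]
  rw [e, s, pow_add, pow_add, tri3, tJ, tJ, tJ]
  push_cast
  ring

lemma expo3_eq (m n k : ℤ) : expo3 m n k = 4 * (m * (m - 1) + n * (n - 1)) + m + 3 * n
    + (12 * k ^ 2 - 8 * (m + n) * k + 4 * k) := by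
  have h1 := two_tri (m - k)
  have h2 := two_tri (n - k)
  have h3 := two_tri k
  rw [expo3, expoJ, expoJ, expoJ]
  push_cast
  linear_combination 4 * h1 + 4 * h2 + 4 * h3

lemma sg_even (r : ℤ) : sg (2 * r) = 1 := by rw [two_mul, sg_add, sg_mul_self]

/-- The theta series `∑ₖ (-1)^k q^{12 k² ± 4 k}` of modulus 24 to which every fibre of the triple
theta series is proportional. -/
noncomputable def eta : ℚ⟦X⟧ := phi 24 24 * phi 24 8 * phi 24 16

/-- Summing out `k` leaves a term of the alternating sum of type `A₂`; the three cases are the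
residues of `m + n` modulo `3`. -/
lemma fibre (m n : ℤ) : HasSum (fun k => tri3 ((m, n), k)) (tT (m, n - m) * eta) := by
  obtain ⟨r, hr⟩ : ∃ r, r = (m + n) / 3 := ⟨_, rfl⟩
  have hcases : m + n = 3 * r ∨ m + n = 3 * r + 1 ∨ m + n = 3 * r + 2 := by omega
  have J1 := jacobi (M := 24) (a := 16) (by norm_num) (by norm_num)
  have J2 := jacobi (M := 24) (a := 8) (by norm_num) (by norm_num)
  have q3 (h : chi (n - m - m + 1) ≠ 0) := quad_eq (y := (m, n - m)) h
  have nn (h : chi (n - m - m + 1) ≠ 0) := expoT_nonneg (y := (m, n - m)) h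
  simp only [expoT] at q3 nn
  rcases hcases with h | h | h
  · have hc : chi (n - m - m + 1) = 1 := by unfold chi; rw [if_pos (by omega)]
    have q3 := q3 (by rw [hc]; norm_num)
    have nn := nn (by rw [hc]; norm_num)
    refine ((Equiv.addRight r).hasSum_iff).1 ?_
    convert J1.mul_left (tT (m, n - m)) using 1
    · rfl
    · funext c
      have t := two_tri c
      have b := expoJ_bound (M := 24) (a := 16) (by norm_num) (by norm_num) c
      simp only [Function.comp, Equiv.coe_addRight, tri3_eq, tT, tJ, hc]
      rw [show m + n + (c + r) = c + 2 * (2 * r) by rw [h]; ring, sg_add, sg_even, mul_one]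
      have e : expo3 m n (c + r) = expoT (m, n - m) + expoJ 24 16 c := by
        rw [expo3_eq, expoT, expoJ]
        push_cast
        obtain rfl : n = 3 * r - m := by linarith
        refine mul_left_cancel₀ (show (3 : ℤ) ≠ 0 by norm_num) ?_
        linear_combination -8 * q3 - 36 * t
      rw [e, Int.toNat_add (by simpa only [expoT] using nn) (by omega), pow_add]
      push_cast
      ring
    · rw [eta]; ring
  · have hc : chi (n - m - m + 1) = -1 := by
      unfold chi; rw [if_neg (by omega), if_pos (by omega)]
    have q3 := q3 (by rw [hc]; norm_num)
    have nn := nn (by rw [hc]; norm_num)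
    refine ((Equiv.addRight r).hasSum_iff).1 ?_
    convert J2.mul_left (tT (m, n - m)) using 1
    · rfl
    · funext c
      have t := two_tri c
      have b := expoJ_bound (M := 24) (a := 8) (by norm_num) (by norm_num) c
      simp only [Function.comp, Equiv.coe_addRight, tri3_eq, tT, tJ, hc]
      rw [show m + n + (c + r) = c + 1 + 2 * (2 * r) by rw [h]; ring, sg_add, sg_even, mul_one,
        sg_succ]
      have e : expo3 m n (c + r) = expoT (m, n - m) + expoJ 24 8 c := by
        rw [expo3_eq, expoT, expoJ]
        push_cast
        obtain rfl : n = 3 * r + 1 - m := by linarith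
        refine mul_left_cancel₀ (show (3 : ℤ) ≠ 0 by norm_num) ?_
        linear_combination -8 * q3 - 36 * t
      rw [e, Int.toNat_add (by simpa only [expoT] using nn) (by omega), pow_add]
      push_cast
      ring
    · rfl
  · have hc : chi (n - m - m + 1) = 0 := by
      unfold chi; rw [if_neg (by omega), if_neg (by omega)]
    -- the reflection `k ↦ 2 r + 1 - k` changes the sign of every term
    have hs : Summable fun k => tri3 ((m, n), k) :=
      (adm_tri3.comp (Prod.mk_right_injective (m, n))).summable
    have ha : ∑' k, tri3 ((m, n), k) = -∑' k, tri3 ((m, n), k) := by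
      conv_lhs => rw [← (Equiv.subLeft (2 * r + 1)).tsum_eq]
      rw [← tsum_neg]
      refine tsum_congr fun k => ?_
      rw [Equiv.subLeft_apply, tri3_eq, tri3_eq]
      rw [show m + n + (2 * r + 1 - k) = m + n + k + 1 + 2 * (r - k) by ring, sg_add, sg_even,
        mul_one, sg_succ]
      have e : expo3 m n (2 * r + 1 - k) = expo3 m n k := by
        rw [expo3_eq, expo3_eq, h]; ring
      rw [e]
      push_cast
      ring
    have h0 : ∑' k, tri3 ((m, n), k) = 0 := by
      have : (2 : ℚ⟦X⟧) * ∑' k, tri3 ((m, n), k) = 0 := by linear_combination ha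
      exact (mul_eq_zero.1 this).resolve_left two_ne_zero
    rw [tT]
    simp only [hc, Int.cast_zero, zero_mul]
    rw [← h0]
    exact hs.hasSum

/-- Splitting an infinite product according to residue classes. -/
lemma phi_regroup {M c : ℕ} (hM : 0 < M) (hc : 0 < c) (a : ℕ) :
    phi M a = ∏ r ∈ Finset.range c, phi (M * c) (M * r + a) := by
  have h1 := (phi_tendsto hM a).comp
    (tendsto_id.const_mul_atTop' (r := c) hc)
  have h2 := tendsto_finsetProd (Finset.range c) fun r (_ : r ∈ Finset.range c) =>
    phi_tendsto (Nat.mul_pos hM hc) (M * r + a)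
  refine tendsto_nhds_unique h1 (h2.congr fun n => ?_)
  rw [Finset.prod_comm]
  simp only [Function.comp, id]
  induction n with
  | zero => simp
  | succ n ih =>
    rw [Finset.prod_range_succ, ih, mul_add, mul_one, Finset.prod_range_add]
    congr 1
    refine Finset.prod_congr rfl fun r _ => ?_
    congr 2
    ring

lemma phi_one : phi 1 1 = phi 8 1 * phi 8 2 * phi 8 3 * phi 8 4 * phi 8 5 * phi 8 6 * phi 8 7
    * phi 8 8 := by
  rw [phi_regroup (c := 8) one_pos (by norm_num) 1]
  simp [Finset.prod_range_succ]

lemma eta_eq : eta = phi 8 8 := by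
  rw [phi_regroup (M := 8) (c := 3) (by norm_num) (by norm_num) 8, eta]
  simp only [Finset.prod_range_succ, Finset.prod_range_zero]
  norm_num
  ring

/-- The Macdonald identity of type `A₂`, specialised to modulus 8. -/
lemma macdonald : ∑' y, tT y
    = phi 8 8 ^ 2 * phi 8 1 * phi 8 7 * phi 8 3 * phi 8 5 * phi 8 4 ^ 2 := by
  have h1 : HasSum (fun x : ℤ × ℤ => tT (x.1, x.2 - x.1) * eta) _ :=
    hasSum_tri3.prod_fiberwise fun x => fibre x.1 x.2
  let e : ℤ × ℤ ≃ ℤ × ℤ :=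
    ⟨fun x => (x.1, x.2 - x.1), fun y => (y.1, y.2 + y.1), fun x => by simp, fun y => by simp⟩
  have h2 := (e.hasSum_iff (f := fun y => tT y * eta)).1 h1
  have h3 : phi 8 8 * (phi 8 8)⁻¹ = 1 :=
    PowerSeries.mul_inv_cancel _ (by rw [phi_const] <;> norm_num)
  have h4 := h2.mul_right (phi 8 8)⁻¹
  simp only [eta_eq, mul_assoc, h3, mul_one] at h4
  rw [h4.tsum_eq]
  linear_combination
    (phi 8 8 ^ 2 * phi 8 1 * phi 8 7 * phi 8 3 * phi 8 5 * phi 8 4 ^ 2) * h3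

lemma sum_mul_prod : (∑' n, tS n)
    * (phi 8 1 * phi 8 2 ^ 2 * phi 8 3 * phi 8 5 * phi 8 6 ^ 2 * phi 8 7) = 1 := by
  have h := limit_identity
  rw [macdonald, phi_one] at h
  have hn (a : ℕ) (ha : 0 < a) : phi 8 a ≠ 0 := phi_ne (by norm_num) ha
  have hd : phi 8 8 ^ 2 * phi 8 1 * phi 8 7 * phi 8 3 * phi 8 5 * phi 8 4 ^ 2 ≠ 0 := by
    simp [hn]
  refine mul_right_cancel₀ hd ?_
  linear_combination h

lemma tprod_eq : (∏' k : ℕ, ((1 - q ^ (8*k+1)) * (1 - q ^ (8*k+2))^2 * (1 - q ^ (8*k+3))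
    * (1 - q ^ (8*k+5)) * (1 - q ^ (8*k+6))^2 * (1 - q ^ (8*k+7))))
    = phi 8 1 * phi 8 2 ^ 2 * phi 8 3 * phi 8 5 * phi 8 6 ^ 2 * phi 8 7 := by
  have h (a : ℕ) : HasProd (fun k : ℕ => (1 : ℚ⟦X⟧) - X ^ (8 * k + a)) (phi 8 a) :=
    (phi_mul (M := 8) (by norm_num) a).hasProd
  simp only [q, pow_two]
  exact ((((((h 1).mul ((h 2).mul (h 2))).mul (h 3)).mul (h 5)).mul ((h 6).mul (h 6))).mul
    (h 7)).tprod_eq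

end Macdonald

/-- Sixth new modulus-8 identity (profile (3,0,2)). -/
theorem a2_mod8_profile302 :
    ∑' n : ℕ × ℕ × ℕ × ℕ,
      (fun n₁ n₂ n₃ n₄ : ℕ =>
        q ^ (n₁ ^ 2 + n₂ ^ 2 + n₃ ^ 2 + n₄ ^ 2 + (n₁) + n₂ * n₄ - n₁ * n₂)
          * (1 + q ^ (n₁ + n₃ + 1) + q ^ (2*n₁ + n₂ + n₃ + n₄ + 2)) * (qPoch n₁)⁻¹ * qBinom n₁ n₂ * qBinom n₁ n₄ * qBinom n₂ n₃)
      n.1 n.2.1 n.2.2.1 n.2.2.2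
      = (∏' k : ℕ, ((1 - q ^ (8*k+1)) * (1 - q ^ (8*k+2))^2 * (1 - q ^ (8*k+3)) * (1 - q ^ (8*k+5)) * (1 - q ^ (8*k+6))^2 * (1 - q ^ (8*k+7))))⁻¹ := by
  rw [tprod_eq, PowerSeries.eq_inv_iff_mul_eq_one]
  · refine Eq.trans (congrArg (· * _) (tsum_congr fun n => ?_)) sum_mul_prod
    simp only [tS, expo, coef, corr, q]
    ring
  · simp [phi_const]
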